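/- Let α₂ be the unique real root in the interval (2,3) of the polynomial q⁴ − 8q³ + 22q² − 28q + 17 (α₂ ≈ 2.225). Then every bridgeless near-cubic finite multigraph G satisfies F(G,q) ≠ 0 for all real q with 2 < q ≤ α₂. -/

import Mathlib

/-- A finite multigraph on vertex type `V` with edge type `E`: each edge `e` has two
(possibly equal) endpoints `fst e` and `snd e`. -/
structure Multigraph (V E : Type) where
  fst : E → V
  snd : E → V

namespace Multigraph

variable {V E : Type}

/-- `a` and `b` are joined by some edge belonging to the edge set `F`. -/
def edgeRelOn (G : Multigraph V E) (F : Set E) (a b : V) : Prop :=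
  ∃ e ∈ F, (G.fst e = a ∧ G.snd e = b) ∨ (G.fst e = b ∧ G.snd e = a)

/-- Reachability in the spanning subgraph `(V, F)`. -/
def Reach (G : Multigraph V E) (F : Set E) : V → V → Prop :=
  Relation.EqvGen (G.edgeRelOn F)

/-- The setoid on `V` whose classes are the connected components of the
spanning subgraph `(V, F)`. -/
def reachSetoid (G : Multigraph V E) (F : Set E) : Setoid V :=
  Relation.EqvGen.setoid (G.edgeRelOn F)

/-- The number of connected components of the spanning subgraph `(V, F)`. -/
noncomputable def ncomp (G : Multigraph V E) (F : Set E) : ℕ :=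
  Nat.card (Quotient (G.reachSetoid F))

/-- The number of connected components of `G`. -/
noncomputable def numComponents (G : Multigraph V E) : ℕ :=
  G.ncomp Set.univ

/-- `G` is connected. -/
def Connected (G : Multigraph V E) : Prop :=
  G.numComponents = 1

/-- An edge is a bridge if deleting it increases the number of connected components. -/
def IsBridge (G : Multigraph V E) (e : E) : Prop :=
  G.numComponents < G.ncomp {e' | e' ≠ e}

/-- `G` has no bridge. -/
def Bridgeless (G : Multigraph V E) : Prop :=
  ∀ e, ¬ G.IsBridge e

/-- `G` has no loops. -/
def Loopless (G : Multigraph V E) : Prop :=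
  ∀ e, G.fst e ≠ G.snd e

/-- Deleting a set `S` of vertices (and all edges meeting `S`). -/
def deleteVerts (G : Multigraph V E) (S : Set V) :
    Multigraph {v // v ∉ S} {e // G.fst e ∉ S ∧ G.snd e ∉ S} where
  fst := fun e => ⟨G.fst e.1, e.2.1⟩
  snd := fun e => ⟨G.snd e.1, e.2.2⟩

/-- A cut-vertex: a vertex whose deletion increases the number of components. -/
def IsCutVertex (G : Multigraph V E) (x : V) : Prop :=
  G.numComponents < (G.deleteVerts {x}).numComponents

/-- A graph is non-separable if it has at most one vertex and at most one edge, or it is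
connected, loopless and has no cut-vertex. -/
def NonSeparable (G : Multigraph V E) : Prop :=
  (Nat.card V ≤ 1 ∧ Nat.card E ≤ 1) ∨
    (G.Connected ∧ G.Loopless ∧ ∀ x, ¬ G.IsCutVertex x)

/-- The degree of a vertex, counted with edge multiplicity; a loop contributes `2`. -/
noncomputable def degree (G : Multigraph V E) (v : V) : ℕ :=
  Nat.card {e | G.fst e = v} + Nat.card {e | G.snd e = v}

/-- The flow polynomial `F(G,q) = ∑_{E'⊆E} (−1)^{|E|−|E'|} q^{|E'|+c(E')−|V|}`,
where `c(E')` is the number of connected components of the spanning subgraph `(V,E')`. -/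
noncomputable def flowPoly (G : Multigraph V E) [Finite V] [Finite E] : Polynomial ℝ :=
  letI : Fintype E := Fintype.ofFinite E
  ∑ E' : Finset E, (-1 : Polynomial ℝ) ^ (Nat.card E - E'.card) *
    Polynomial.X ^ (E'.card + G.ncomp ↑E' - Nat.card V)

/-- A subgraph of a multigraph: a set of vertices and a set of edges with both
endpoints among those vertices. -/
structure Subgraph (G : Multigraph V E) where
  verts : Set V
  edges : Set E
  fst_mem : ∀ ⦃e⦄, e ∈ edges → G.fst e ∈ verts
  snd_mem : ∀ ⦃e⦄, e ∈ edges → G.snd e ∈ verts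

/-- A subgraph, viewed as a multigraph in its own right. -/
def Subgraph.toMultigraph {G : Multigraph V E} (H : G.Subgraph) :
    Multigraph H.verts H.edges where
  fst := fun e => ⟨G.fst e.1, H.fst_mem e.2⟩
  snd := fun e => ⟨G.snd e.1, H.snd_mem e.2⟩

/-- `H` is a connected component of `G`: its vertex set is the set of vertices reachable
from some vertex, and its edges are all the edges of `G` joining its vertices. -/
def IsComponent {G : Multigraph V E} (H : G.Subgraph) : Prop :=
  (∃ v ∈ H.verts, ∀ u, u ∈ H.verts ↔ G.Reach Set.univ v u) ∧
    ∀ e, e ∈ H.edges ↔ (G.fst e ∈ H.verts ∧ G.snd e ∈ H.verts)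

/-- `H` is a block of `G`: a maximal non-separable subgraph. -/
def IsBlock {G : Multigraph V E} (H : G.Subgraph) : Prop :=
  H.toMultigraph.NonSeparable ∧
    ∀ H' : G.Subgraph, H'.toMultigraph.NonSeparable →
      H.verts ⊆ H'.verts → H.edges ⊆ H'.edges → H' = H

/-- A trivial block: a single vertex and no edges. -/
def Subgraph.IsTrivial {G : Multigraph V E} (H : G.Subgraph) : Prop :=
  (∃ v, H.verts = {v}) ∧ H.edges = ∅

/-- An orientation of a multigraph: each edge is given a tail and a head,
consistent with its two endpoints. -/
structure Orientation (G : Multigraph V E) where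
  tail : E → V
  head : E → V
  consistent : ∀ e, (tail e = G.fst e ∧ head e = G.snd e) ∨
    (tail e = G.snd e ∧ head e = G.fst e)

open Classical in
/-- A `Γ`-flow on an orientation `D`: at every vertex, the sum of the values on
the arcs with that tail equals the sum of the values on the arcs with that head. -/
noncomputable def Orientation.IsFlow {G : Multigraph V E} [Fintype E]
    (D : G.Orientation) {Γ : Type} [AddCommGroup Γ] (φ : E → Γ) : Prop :=
  ∀ v : V, ∑ e ∈ Finset.univ.filter (fun e => D.tail e = v), φ e =
    ∑ e ∈ Finset.univ.filter (fun e => D.head e = v), φ e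

/-- Deleting an edge. -/
def deleteEdge (G : Multigraph V E) (e₀ : E) : Multigraph V {e // e ≠ e₀} where
  fst := fun e => G.fst e.1
  snd := fun e => G.snd e.1

/-- Adding a new edge joining `x` and `y`. -/
def addEdge (G : Multigraph V E) (x y : V) : Multigraph V (E ⊕ Unit) where
  fst := Sum.elim G.fst fun _ => x
  snd := Sum.elim G.snd fun _ => y

/-- Contracting a set `F` of edges: vertices joined through `F` are identified,
and the edges of `F` are removed. -/
def contract (G : Multigraph V E) (F : Set E) :
    Multigraph (Quotient (G.reachSetoid F)) {e // e ∉ F} where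
  fst := fun e => Quotient.mk _ (G.fst e.1)
  snd := fun e => Quotient.mk _ (G.snd e.1)

/-- The number of proper colourings of the vertices of `G` with `n` colours. -/
noncomputable def properColorings (G : Multigraph V E) (n : ℕ) : ℕ :=
  Nat.card {f : V → Fin n // ∀ e, f (G.fst e) ≠ f (G.snd e)}

/-- An isomorphism of multigraphs. -/
structure Iso {V' E' : Type} (G : Multigraph V E) (G' : Multigraph V' E') where
  vmap : V ≃ V'
  emap : E ≃ E'
  ends : ∀ e, (G'.fst (emap e) = vmap (G.fst e) ∧ G'.snd (emap e) = vmap (G.snd e)) ∨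
    (G'.fst (emap e) = vmap (G.snd e) ∧ G'.snd (emap e) = vmap (G.fst e))

open Classical in
/-- Subdividing the edge `e₀`: it is replaced by a path of length two through a new vertex. -/
noncomputable def subdivide (G : Multigraph V E) (e₀ : E) :
    Multigraph (V ⊕ Unit) (E ⊕ Unit) where
  fst := Sum.elim (fun e => Sum.inl (G.fst e)) fun _ => Sum.inr ()
  snd := Sum.elim (fun e => if e = e₀ then Sum.inr () else Sum.inl (G.snd e))
    fun _ => Sum.inl (G.snd e₀)

/-- `G` is a subdivision of `H`. -/
inductive IsSubdivisionOf :
    {V E V' E' : Type} → Multigraph V E → Multigraph V' E' → Prop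
  | of_iso {V E V' E'} {G : Multigraph V E} {H : Multigraph V' E'} :
      Iso G H → IsSubdivisionOf G H
  | step {V E V' E'} {G : Multigraph V E} {H : Multigraph V' E'} (e : E) :
      IsSubdivisionOf G H → IsSubdivisionOf (G.subdivide e) H
  | iso_left {V₁ E₁ V₂ E₂ V' E'} {G₁ : Multigraph V₁ E₁} {G₂ : Multigraph V₂ E₂}
      {H : Multigraph V' E'} :
      Iso G₁ G₂ → IsSubdivisionOf G₂ H → IsSubdivisionOf G₁ H

/-- A multigraph is 3-connected if it has at least 4 vertices and remains connected
after deleting any set of fewer than 3 vertices. -/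
def ThreeConnected (G : Multigraph V E) : Prop :=
  4 ≤ Nat.card V ∧ ∀ S : Set V, S.ncard < 3 → (G.deleteVerts S).Connected

/-- `G` is (isomorphic to) the multigraph `Z_k` with two vertices joined by `k`
parallel edges. -/
def IsZk (G : Multigraph V E) (k : ℕ) : Prop :=
  Nat.card V = 2 ∧ Nat.card E = k ∧ G.Loopless

/-- `G` is essentially 3-connected: a subdivision of a 3-connected graph,
or `Z_k` for some `k ≥ 3`. -/
def EssentiallyThreeConnected (G : Multigraph V E) : Prop :=
  (∃ (V' E' : Type) (H : Multigraph V' E'), H.ThreeConnected ∧ G.IsSubdivisionOf H) ∨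
    ∃ k, 3 ≤ k ∧ G.IsZk k

end Multigraph

/-!
At a vertex of degree 3 joined to `h`, `a` and `b`, contraction and deletion of the edge to `h`
replace the graph by two smaller ones: in the first the neighbours `a` and `b` are attached to `h`,
in the second they are joined to each other. With the sign expected of a near-cubic graph the two
flow polynomials add up, to a value that has to be shown positive. Small edge cuts factor the flow
polynomial, so it is enough to treat reduced graphs; the first of the two smaller graphs is reduced
again, hence positive by induction, unless a single inner edge separates `a` from `b`, but the
second may have a two-edge cut and a flow polynomial `e` of the wrong sign. One therefore controls
its size relative to the first, `c`: writing `c = (1 + s) r g` and `e = (s - r) g` with `s = q - 2`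
and `g > 0`, a single inner edge between two parts gives `r = -r₁ r₂`, and a two-edge cut gives an
explicit estimate of `r`. The interval `[-t², t]` with `2t = 1 - s²` is stable under both operations
as soon as `s ≤ t²`, that is `4s ≤ (1 - s²)²`, and in terms of `q` equality here is the quartic
defining `α₂`.
-/

theorem multiset_powerset_map {α β : Type*} (f : α → β) (M : Multiset α) :
    (M.map f).powerset = M.powerset.map (Multiset.map f) := by
  induction M using Multiset.induction with
  | empty => simp
  | cons a M ih => simp [Multiset.powerset_cons, ih, Multiset.map_map]

theorem card_quotient_lt_of_lt {α : Type*} [Finite α] {r s : Setoid α} (hrs : r < s) :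
    Nat.card (Quotient s) < Nat.card (Quotient r) := by
  by_contra! hle
  have hsurj : Function.Surjective (Quotient.map' id hrs.le : Quotient r → Quotient s) :=
    Quotient.ind fun a => ⟨Quotient.mk r a, rfl⟩
  have hinj := (hsurj.bijective_of_nat_card_le hle).injective
  exact hrs.not_ge fun a b hab => Quotient.exact (hinj (Quotient.sound hab))

/-- A multigraph on the vertex type `V`, encoded by the multiset of its edges. -/
abbrev EdgeMultiset (V : Type*) := Multiset (Sym2 V)

namespace EdgeMultiset

section Identify

variable {V : Type*}

/-- Every end of every edge of `M` lies in `X`. -/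
def SupportedOn (X : Finset V) (M : EdgeMultiset V) : Prop := ∀ e ∈ M, ∀ v ∈ e, v ∈ X

theorem supportedOn_cons {X : Finset V} {a b : V} {M : EdgeMultiset V} :
    SupportedOn X (s(a, b) ::ₘ M) ↔ a ∈ X ∧ b ∈ X ∧ SupportedOn X M := by
  simp [SupportedOn, and_assoc]

theorem SupportedOn.mono {X Y : Finset V} {M : EdgeMultiset V} (h : SupportedOn X M)
    (hXY : X ⊆ Y) : SupportedOn Y M :=
  fun e he v hv => hXY (h e he v hv)

theorem SupportedOn.notMem {X : Finset V} {M : EdgeMultiset V} (h : SupportedOn X M) {b : V}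
    (hb : b ∉ X) : ∀ e ∈ M, b ∉ e :=
  fun e he hbe => hb (h e he b hbe)

theorem eq_zero_of_supportedOn_singleton {h : V} {M : EdgeMultiset V} (hM : SupportedOn {h} M)
    (hloop : s(h, h) ∉ M) : M = 0 := by
  refine Multiset.eq_zero_of_forall_notMem fun e he => ?_
  induction e with | _ x y =>
  have hx : x = h := by simpa using hM _ he x (by simp)
  have hy : y = h := by simpa using hM _ he y (by simp)
  exact hloop (by rwa [hx, hy] at he)

variable [DecidableEq V]

/-- The edge multiset obtained from `M` by identifying the vertex `b` with `a`; together with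
the removal of the edge `ab` this is the contraction of `ab`. -/
def identify (b a : V) (M : EdgeMultiset V) : EdgeMultiset V :=
  M.map (Sym2.map (Function.update id b a))

@[simp]
theorem identify_cons (b a x y : V) (M : EdgeMultiset V) :
    identify b a (s(x, y) ::ₘ M) =
      s(Function.update id b a x, Function.update id b a y) ::ₘ identify b a M := by
  simp [identify]

@[simp]
theorem identify_add (b a : V) (M N : EdgeMultiset V) :
    identify b a (M + N) = identify b a M + identify b a N := by
  simp [identify]

@[simp]
theorem card_identify (b a : V) (M : EdgeMultiset V) : (identify b a M).card = M.card := by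
  simp [identify]

theorem identify_of_forall_notMem {b : V} {M : EdgeMultiset V} (hb : ∀ e ∈ M, b ∉ e) (a : V) :
    identify b a M = M := by
  refine (Multiset.map_congr rfl fun e he => ?_).trans M.map_id
  have hfix : Sym2.map (Function.update id b a) e = Sym2.map id e :=
    Sym2.map_congr fun v hv => Function.update_of_ne (by rintro rfl; exact hb e he hv) a id
  rw [hfix, Sym2.map_id]

theorem update_mem {X : Finset V} {a p : V} (ha : a ∈ X) (hp : p ∈ X) (b : V) :
    Function.update id b a p ∈ X := by
  rcases eq_or_ne p b with rfl | hpb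
  · rwa [Function.update_self]
  · rwa [Function.update_of_ne hpb]

theorem supportedOn_identify {X : Finset V} {M : EdgeMultiset V} (h : SupportedOn X M) {a : V}
    (ha : a ∈ X) (b : V) : SupportedOn X (identify b a M) := by
  intro e he v hv
  obtain ⟨e', he', rfl⟩ := Multiset.mem_map.1 he
  obtain ⟨w, hw, rfl⟩ := Sym2.mem_map.1 hv
  exact update_mem ha (h e' he' w hw) b

/-- Induction on an edge multiset by deleting and contracting edges, while keeping track of the
images of two terminals `p` and `r`. The vertex `h` is never absorbed by a contraction. -/
theorem SupportedOn.induction_on {X : Finset V} {h : V} {P : EdgeMultiset V → V → V → Prop}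
    (zero : ∀ p ∈ X, ∀ r ∈ X, P 0 p r)
    (loop : ∀ M a p r, P M p r → P (s(a, a) ::ₘ M) p r)
    (cons : ∀ M a b p r, b ∈ X → b ≠ h → a ≠ b → P M p r →
      P (identify b a M) (Function.update id b a p) (Function.update id b a r) →
      P (s(a, b) ::ₘ M) p r)
    {M : EdgeMultiset V} (hM : SupportedOn X M) {p : V} (hp : p ∈ X) {r : V} (hr : r ∈ X) :
    P M p r := by
  induction hn : M.card generalizing M p r with
  | zero => rw [Multiset.card_eq_zero.1 hn]; exact zero p hp r hr
  | succ n ih =>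
    obtain ⟨e, M, rfl⟩ := (Multiset.card_pos_iff_exists_mem.1 (by omega : 0 < M.card)).imp
      fun e he => Multiset.exists_cons_of_mem he
    have hcard : M.card = n := by simpa using hn
    have contract : ∀ a b, a ∈ X → b ∈ X → b ≠ h → a ≠ b → SupportedOn X M →
        P (s(a, b) ::ₘ M) p r := fun a b ha hb hbh hab hM =>
      cons M a b p r hb hbh hab (ih hM hp hr hcard)
        (ih (supportedOn_identify hM ha b) (update_mem ha hp b)
          (update_mem ha hr b) (by simpa using hcard))
    induction e with | _ a b =>
    obtain ⟨ha, hb, hM'⟩ := supportedOn_cons.1 hM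
    rcases eq_or_ne a b with rfl | hab
    · exact loop M a p r (ih hM' hp hr hcard)
    · rcases eq_or_ne b h with rfl | hbh
      · rw [Sym2.eq_swap]
        exact contract b a hb ha hab hab.symm hM'
      · exact contract a b ha hb hbh hab hM'

end Identify

section Components

variable {V : Type*}

/-- The partition of the vertices into the components of the spanning subgraph with edges `S`. -/
def componentSetoid (S : EdgeMultiset V) : Setoid V :=
  Relation.EqvGen.setoid fun a b => s(a, b) ∈ S

/-- The number of components `c(S)` of the spanning subgraph with edges `S`. -/
noncomputable def numComponents (S : EdgeMultiset V) : ℕ := Nat.card (Quotient (componentSetoid S))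

theorem mk_eq_mk_of_mem {S : EdgeMultiset V} {a b : V} (h : s(a, b) ∈ S) :
    (Quotient.mk (componentSetoid S) a) = Quotient.mk (componentSetoid S) b :=
  Quotient.sound (Relation.EqvGen.rel a b h)

theorem componentSetoid_le {S : EdgeMultiset V} {r : Setoid V}
    (h : ∀ a b, s(a, b) ∈ S → r a b) : componentSetoid S ≤ r :=
  Setoid.eqvGen_le h

theorem componentSetoid_zero : componentSetoid (0 : EdgeMultiset V) = ⊥ :=
  bot_unique (componentSetoid_le (by simp))

theorem componentSetoid_loop_cons (a : V) (S : EdgeMultiset V) :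
    componentSetoid (s(a, a) ::ₘ S) = componentSetoid S := by
  refine le_antisymm (componentSetoid_le fun x y h => ?_)
    (componentSetoid_le fun x y h => Relation.EqvGen.rel x y (Multiset.mem_cons_of_mem h))
  rcases Multiset.mem_cons.1 h with h | h
  · obtain ⟨rfl, rfl⟩ : x = a ∧ y = a := by simpa using h
    exact Setoid.refl' _ _
  · exact Relation.EqvGen.rel x y h

theorem numComponents_zero : numComponents (0 : EdgeMultiset V) = Nat.card V := by
  rw [numComponents, componentSetoid_zero]
  exact Nat.card_congr Setoid.quotientBotEquiv

theorem numComponents_loop_cons (a : V) (S : EdgeMultiset V) :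
    numComponents (s(a, a) ::ₘ S) = numComponents S := by
  rw [numComponents, numComponents, componentSetoid_loop_cons]

variable [DecidableEq V]

theorem componentSetoid_cons_le_comap {a b : V} (hab : a ≠ b) (S : EdgeMultiset V) :
    componentSetoid (s(a, b) ::ₘ S) ≤
      Setoid.comap (Function.update id b a) (componentSetoid (identify b a S)) := by
  refine componentSetoid_le fun x y h => ?_
  rw [Setoid.comap_rel]
  rcases Multiset.mem_cons.1 h with h | h
  · rcases Sym2.eq_iff.1 h with ⟨rfl, rfl⟩ | ⟨rfl, rfl⟩ <;>
      rw [Function.update_self, Function.update_of_ne hab] <;>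
      exact Setoid.refl' _ _
  · exact Relation.EqvGen.rel _ _ (Multiset.mem_map_of_mem _ h)

theorem componentSetoid_identify {a b : V} (hab : a ≠ b) (S : EdgeMultiset V) :
    componentSetoid (identify b a S) = Setoid.ker fun v =>
      if v = b then none else some (Quotient.mk (componentSetoid (s(a, b) ::ₘ S)) v) := by
  have update_ne (x : V) : Function.update id b a x ≠ b := by
    rcases eq_or_ne x b with rfl | hx
    · rwa [Function.update_self]
    · rwa [Function.update_of_ne hx]
  have mk_update (x : V) : Quotient.mk (componentSetoid (s(a, b) ::ₘ S))
      (Function.update id b a x) = Quotient.mk _ x := by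
    rcases eq_or_ne x b with rfl | hx
    · rw [Function.update_self]
      exact mk_eq_mk_of_mem (Multiset.mem_cons_self _ _)
    · rw [Function.update_of_ne hx, id]
  refine le_antisymm (componentSetoid_le fun x y h => ?_) fun x y h => ?_
  · obtain ⟨e, he, hxy⟩ := Multiset.mem_map.1 h
    induction e with | _ x' y' =>
    have hmk := mk_eq_mk_of_mem (Multiset.mem_cons_of_mem he : s(x', y') ∈ s(a, b) ::ₘ S)
    rw [Setoid.ker_def]
    rcases Sym2.eq_iff.1 hxy with ⟨rfl, rfl⟩ | ⟨rfl, rfl⟩ <;>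
      simp only [update_ne, if_false, mk_update, hmk]
  · rw [Setoid.ker_def] at h
    by_cases hx : x = b <;> by_cases hy : y = b <;> simp only [hx, hy, if_true, if_false,
      reduceCtorEq, Option.some_inj] at h
    · rw [hx, hy]
    · have := componentSetoid_cons_le_comap hab S (Quotient.exact h)
      rwa [Setoid.comap_rel, Function.update_of_ne hx, Function.update_of_ne hy] at this

theorem numComponents_identify [Finite V] {a b : V} (hab : a ≠ b) (S : EdgeMultiset V) :
    numComponents (identify b a S) = numComponents (s(a, b) ::ₘ S) + 1 := by
  have hsurj : Function.Surjective fun v =>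
      if v = b then none else some (Quotient.mk (componentSetoid (s(a, b) ::ₘ S)) v) := by
    rintro (_ | c)
    · exact ⟨b, if_pos rfl⟩
    · induction c using Quotient.inductionOn with | _ v =>
      rcases eq_or_ne v b with rfl | hv
      · exact ⟨a, by simpa [hab] using mk_eq_mk_of_mem (Multiset.mem_cons_self _ _)⟩
      · exact ⟨v, if_neg hv⟩
  rw [numComponents, componentSetoid_identify hab,
    Nat.card_congr (Setoid.quotientKerEquivOfSurjective _ hsurj), Finite.card_option, numComponents]

end Components

section Flow

variable {V R : Type*} [CommRing R]

theorem card_le_card_add_numComponents [Finite V] (S : EdgeMultiset V) :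
    Nat.card V ≤ S.card + numComponents S := by
  classical
  induction hn : S.card generalizing S with
  | zero => rw [Multiset.card_eq_zero.1 hn, numComponents_zero, zero_add]
  | succ n ih =>
    obtain ⟨e, S, rfl⟩ := (Multiset.card_pos_iff_exists_mem.1 (by omega : 0 < S.card)).imp
      fun e he => Multiset.exists_cons_of_mem he
    have hcard : S.card = n := by simpa using hn
    induction e with | _ a b =>
    rcases eq_or_ne a b with rfl | hab
    · have := ih S hcard
      rw [numComponents_loop_cons]
      omega
    · have := ih (identify b a S) (by simpa using hcard)
      rw [numComponents_identify hab] at this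
      omega

/-- The flow polynomial of the multigraph `M`, evaluated at `q`. The exponent is a truncated
subtraction, which is harmless by `card_le_card_add_numComponents`. -/
noncomputable def flow (q : R) (M : EdgeMultiset V) : R :=
  (M.powerset.map fun S =>
    (-1) ^ (M.card - S.card) * q ^ (S.card + numComponents S - Nat.card V)).sum

theorem flow_zero (q : R) : flow q (0 : EdgeMultiset V) = 1 := by
  simp [flow, numComponents_zero]

theorem flow_cons_add_flow (q : R) (e : Sym2 V) (M : EdgeMultiset V) :
    flow q (e ::ₘ M) + flow q M = (M.powerset.map fun S => (-1) ^ (M.card - S.card) *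
      q ^ (S.card + 1 + numComponents (e ::ₘ S) - Nat.card V)).sum := by
  have without_e : (M.powerset.map fun S => (-1) ^ (M.card + 1 - S.card) *
      q ^ (S.card + numComponents S - Nat.card V)).sum = -flow q M := by
    rw [flow, ← Multiset.sum_map_neg]
    refine congrArg _ (Multiset.map_congr rfl fun S hS => ?_)
    rw [Nat.sub_add_comm (Multiset.card_le_card (Multiset.mem_powerset.1 hS)), pow_succ]
    ring
  simp only [flow.eq_def q (e ::ₘ M), Multiset.powerset_cons, Multiset.map_add, Multiset.sum_add,
    Multiset.map_map, Multiset.card_cons, Function.comp_def, without_e, Nat.add_sub_add_right]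
  ring

variable [Finite V]

theorem flow_loop_cons (q : R) (a : V) (M : EdgeMultiset V) :
    flow q (s(a, a) ::ₘ M) = (q - 1) * flow q M := by
  have hsum := flow_cons_add_flow q s(a, a) M
  have htail : (M.powerset.map fun S => (-1) ^ (M.card - S.card) *
      q ^ (S.card + 1 + numComponents (s(a, a) ::ₘ S) - Nat.card V)).sum = q * flow q M := by
    rw [flow, ← Multiset.sum_map_mul_left]
    refine congrArg _ (Multiset.map_congr rfl fun S _ => ?_)
    have hle := card_le_card_add_numComponents S
    rw [numComponents_loop_cons, show S.card + 1 + numComponents S - Nat.card V =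
      S.card + numComponents S - Nat.card V + 1 by omega, pow_succ]
    ring
  linear_combination hsum + htail

theorem flow_cons_of_ne [DecidableEq V] (q : R) {a b : V} (hab : a ≠ b) (M : EdgeMultiset V) :
    flow q (s(a, b) ::ₘ M) = flow q (identify b a M) - flow q M := by
  rw [eq_sub_iff_add_eq, flow_cons_add_flow, flow, card_identify]
  conv_rhs => rw [identify, multiset_powerset_map, Multiset.map_map]
  refine congrArg _ (Multiset.map_congr rfl fun S _ => ?_)
  change _ = (-1) ^ (M.card - (identify b a S).card) *
    q ^ ((identify b a S).card + numComponents (identify b a S) - Nat.card V)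
  rw [card_identify, numComponents_identify hab, add_right_comm, add_assoc]

theorem flow_cons_eq_zero_of_pendant (q : R) {a b : V} (hab : b ≠ a) {M : EdgeMultiset V}
    (hb : ∀ e ∈ M, b ∉ e) : flow q (s(b, a) ::ₘ M) = 0 := by
  classical
  rw [Sym2.eq_swap, flow_cons_of_ne q hab.symm, identify_of_forall_notMem hb, sub_self]

theorem flow_series (q : R) {x a b : V} (ha : x ≠ a) (hb : x ≠ b) {M : EdgeMultiset V}
    (hx : ∀ e ∈ M, x ∉ e) :
    flow q (s(x, a) ::ₘ s(x, b) ::ₘ M) = flow q (s(a, b) ::ₘ M) := by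
  classical
  rw [Sym2.eq_swap (a := x) (b := a), flow_cons_of_ne q ha.symm,
    flow_cons_eq_zero_of_pendant q hb hx, sub_zero, identify_cons, Function.update_self,
    Function.update_of_ne hb.symm, identify_of_forall_notMem hx, id]

theorem flow_cubic_vertex (q : R) {x h a b : V} (hh : x ≠ h) (ha : x ≠ a) (hb : x ≠ b)
    {M : EdgeMultiset V} (hx : ∀ e ∈ M, x ∉ e) :
    flow q (s(h, x) ::ₘ s(x, a) ::ₘ s(x, b) ::ₘ M) =
      flow q (s(h, a) ::ₘ s(h, b) ::ₘ M) - flow q (s(a, b) ::ₘ M) := by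
  classical
  rw [flow_cons_of_ne q hh.symm, flow_series q ha hb hx]
  simp only [identify_cons, Function.update_self, Function.update_of_ne ha.symm,
    Function.update_of_ne hb.symm, identify_of_forall_notMem hx, id]

end Flow

section FlowIdentities

variable {V R : Type*} [DecidableEq V] [CommRing R] (q : R) {h : V} {X Y : Finset V}
  {M N : EdgeMultiset V}

theorem notMem_of_inter_eq_singleton (hXY : X ∩ Y = {h}) {b : V} (hb : b ∈ X) (hbh : b ≠ h) :
    b ∉ Y :=
  fun hbY => hbh (Finset.mem_singleton.1 (hXY ▸ Finset.mem_inter.2 ⟨hb, hbY⟩))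

theorem insert_inter_insert_of_disjoint (hXY : Disjoint X Y) :
    insert h X ∩ insert h Y = {h} := by
  rw [← Finset.insert_inter_distrib, Finset.disjoint_iff_inter_eq_empty.1 hXY]
  rfl

variable [Finite V]

theorem flow_add (hXY : X ∩ Y = {h}) (hM : SupportedOn X M) (hN : SupportedOn Y N) :
    flow q (M + N) = flow q M * flow q N := by
  have hh : h ∈ X := Finset.mem_of_mem_inter_left (hXY ▸ Finset.mem_singleton_self h)
  refine SupportedOn.induction_on (h := h)
    (P := fun M _ _ => flow q (M + N) = flow q M * flow q N) ?_ ?_ ?_ hM hh hh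
  · intro _ _ _ _
    rw [zero_add, flow_zero, one_mul]
  · intro M a _ _ ih
    rw [Multiset.cons_add, flow_loop_cons, flow_loop_cons, ih, mul_assoc]
  · intro M a b _ _ hb hbh hab ih ih_contract
    have hbN := hN.notMem (notMem_of_inter_eq_singleton hXY hb hbh)
    rw [Multiset.cons_add, flow_cons_of_ne q hab, flow_cons_of_ne q hab, identify_add,
      identify_of_forall_notMem hbN, ih, ih_contract, sub_mul]

theorem flow_add_cons (hXY : X ∩ Y = {h}) (hM : SupportedOn X M) (hN : SupportedOn Y N)
    {p₁ p₂ : V} (hp₁ : p₁ ∈ X) (hp₂ : p₂ ∈ Y) :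
    (q - 1) * flow q (M + s(p₁, p₂) ::ₘ N) =
      flow q (M + s(h, p₁) ::ₘ 0) * flow q (s(h, p₂) ::ₘ N) := by
  refine SupportedOn.induction_on (h := h) (P := fun M p _ =>
    (q - 1) * flow q (M + s(p, p₂) ::ₘ N) =
      flow q (M + s(h, p) ::ₘ 0) * flow q (s(h, p₂) ::ₘ N)) ?_ ?_ ?_ hM hp₁ hp₁
  · intro p hp _ _
    rcases eq_or_ne p h with rfl | hph
    · simp only [zero_add, flow_loop_cons, flow_zero, mul_one]
    · have hpY := notMem_of_inter_eq_singleton hXY hp hph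
      rw [zero_add, zero_add, flow_cons_eq_zero_of_pendant q (ne_of_mem_of_not_mem hp₂ hpY).symm
        (hN.notMem hpY), Sym2.eq_swap, flow_cons_eq_zero_of_pendant q hph (by simp), mul_zero,
        zero_mul]
  · intro M a p _ ih
    simp only [Multiset.cons_add, flow_loop_cons]
    linear_combination (q - 1) * ih
  · intro M a b p _ hb hbh hab ih ih_contract
    have hbY := notMem_of_inter_eq_singleton hXY hb hbh
    simp only [Multiset.cons_add, flow_cons_of_ne q hab, identify_add, identify_cons,
      identify_of_forall_notMem (hN.notMem hbY), Function.update_of_ne hbh.symm,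
      Function.update_of_ne (ne_of_mem_of_not_mem hp₂ hbY), id,
      identify_of_forall_notMem (M := 0) (b := b) (by simp)]
    linear_combination ih_contract - ih

theorem flow_cut_vertex_of_one_edge (hXY : X ∩ Y = {h}) (hM : SupportedOn X M)
    (hN : SupportedOn Y N) {p₁ p₂ : V} (hp₁ : p₁ ∈ X) (hp₂ : p₂ ∈ Y) :
    (q - 1) * flow q (s(p₁, p₂) ::ₘ (M + N)) =
      flow q (s(h, p₁) ::ₘ M) * flow q (s(h, p₂) ::ₘ N) := by
  simpa only [Multiset.add_cons, Multiset.cons_add, add_zero] using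
    flow_add_cons q hXY hM hN hp₁ hp₂

theorem flow_two_pendants (hXY : X ∩ Y = {h}) (hN : SupportedOn Y N) {x y x' y' : V}
    (hx : x ∈ X) (hxh : x ≠ h) (hxy : x ≠ y) (hx' : x' ∈ Y) (hy' : y' ∈ Y) :
    flow q (s(x, x') ::ₘ s(y, y') ::ₘ N) = 0 ∧ flow q (s(h, x) ::ₘ s(h, y) ::ₘ 0) = 0 := by
  have hxY := notMem_of_inter_eq_singleton hXY hx hxh
  have hxx' := (ne_of_mem_of_not_mem hx' hxY).symm
  have hxy' := (ne_of_mem_of_not_mem hy' hxY).symm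
  rw [Sym2.eq_swap (a := h) (b := x)]
  refine ⟨flow_cons_eq_zero_of_pendant q hxx' ?_, flow_cons_eq_zero_of_pendant q hxh ?_⟩
  · simpa [hxy, hxy'] using hN.notMem hxY
  · simp [hxy, hxh]

theorem flow_two_terminals (hXY : X ∩ Y = {h}) (hN : SupportedOn Y N)
    {p r p₂ r₂ : V} (hp : p ∈ X) (hr : r ∈ X) (hp₂ : p₂ ∈ Y) (hr₂ : r₂ ∈ Y) :
    (q - 1) * (q - 2) * flow q (s(p, p₂) ::ₘ s(r, r₂) ::ₘ N) =
      flow q (s(h, p) ::ₘ s(h, r) ::ₘ 0) * flow q (s(h, p₂) ::ₘ s(h, r₂) ::ₘ N)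
      + (q - 1) * (flow q (s(p, r) ::ₘ 0) * flow q (s(p₂, r₂) ::ₘ N))
      - flow q (s(p, r) ::ₘ 0) * flow q (s(h, p₂) ::ₘ s(h, r₂) ::ₘ N)
      - flow q (s(h, p) ::ₘ s(h, r) ::ₘ 0) * flow q (s(p₂, r₂) ::ₘ N) := by
  rcases eq_or_ne p r with rfl | hpr
  · rcases eq_or_ne p h with rfl | hph
    · simp only [flow_loop_cons, flow_zero]
      ring
    · have hpY := notMem_of_inter_eq_singleton hXY hp hph
      rw [flow_series q (ne_of_mem_of_not_mem hp₂ hpY).symm (ne_of_mem_of_not_mem hr₂ hpY).symm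
        (hN.notMem hpY), Sym2.eq_swap (a := h) (b := p), flow_series q hph hph (by simp)]
      simp only [flow_loop_cons, flow_zero]
      ring
  · have hpr_flow : flow q (s(p, r) ::ₘ 0) = 0 :=
      flow_cons_eq_zero_of_pendant q hpr (by simp)
    obtain ⟨hN_flow, hh_flow⟩ : flow q (s(p, p₂) ::ₘ s(r, r₂) ::ₘ N) = 0 ∧
        flow q (s(h, p) ::ₘ s(h, r) ::ₘ 0) = 0 := by
      rcases eq_or_ne p h with rfl | hph
      · rw [Multiset.cons_swap, Multiset.cons_swap s(p, p)]
        exact flow_two_pendants q hXY hN hr hpr.symm hpr.symm hr₂ hp₂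
      · exact flow_two_pendants q hXY hN hp hph hpr hp₂ hr₂
    rw [hN_flow, hh_flow, hpr_flow]
    ring

theorem flow_add_cons_cons (hXY : X ∩ Y = {h}) (hM : SupportedOn X M) (hN : SupportedOn Y N)
    {p₁ r₁ p₂ r₂ : V} (hp₁ : p₁ ∈ X) (hr₁ : r₁ ∈ X) (hp₂ : p₂ ∈ Y) (hr₂ : r₂ ∈ Y) :
    (q - 1) * (q - 2) * flow q (M + s(p₁, p₂) ::ₘ s(r₁, r₂) ::ₘ N) =
      flow q (M + s(h, p₁) ::ₘ s(h, r₁) ::ₘ 0) * flow q (s(h, p₂) ::ₘ s(h, r₂) ::ₘ N)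
      + (q - 1) * (flow q (M + s(p₁, r₁) ::ₘ 0) * flow q (s(p₂, r₂) ::ₘ N))
      - flow q (M + s(p₁, r₁) ::ₘ 0) * flow q (s(h, p₂) ::ₘ s(h, r₂) ::ₘ N)
      - flow q (M + s(h, p₁) ::ₘ s(h, r₁) ::ₘ 0) * flow q (s(p₂, r₂) ::ₘ N) := by
  refine SupportedOn.induction_on (h := h) (P := fun M p r =>
    (q - 1) * (q - 2) * flow q (M + s(p, p₂) ::ₘ s(r, r₂) ::ₘ N) =
      flow q (M + s(h, p) ::ₘ s(h, r) ::ₘ 0) * flow q (s(h, p₂) ::ₘ s(h, r₂) ::ₘ N)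
      + (q - 1) * (flow q (M + s(p, r) ::ₘ 0) * flow q (s(p₂, r₂) ::ₘ N))
      - flow q (M + s(p, r) ::ₘ 0) * flow q (s(h, p₂) ::ₘ s(h, r₂) ::ₘ N)
      - flow q (M + s(h, p) ::ₘ s(h, r) ::ₘ 0) * flow q (s(p₂, r₂) ::ₘ N)) ?_ ?_ ?_ hM hp₁ hr₁
  · intro p hp r hr
    simpa only [zero_add] using flow_two_terminals q hXY hN hp hr hp₂ hr₂
  · intro M a p r ih
    simp only [Multiset.cons_add, flow_loop_cons]
    linear_combination (q - 1) * ih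
  · intro M a b p r hb hbh hab ih ih_contract
    have hbY := notMem_of_inter_eq_singleton hXY hb hbh
    simp only [Multiset.cons_add, flow_cons_of_ne q hab, identify_add, identify_cons,
      identify_of_forall_notMem (hN.notMem hbY), Function.update_of_ne hbh.symm,
      Function.update_of_ne (ne_of_mem_of_not_mem hp₂ hbY),
      Function.update_of_ne (ne_of_mem_of_not_mem hr₂ hbY), id,
      identify_of_forall_notMem (M := 0) (b := b) (by simp)]
    linear_combination ih_contract - ih

theorem flow_cut_vertex_of_two_edges (hXY : X ∩ Y = {h}) (hM : SupportedOn X M)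
    (hN : SupportedOn Y N) {p₁ r₁ p₂ r₂ : V} (hp₁ : p₁ ∈ X) (hr₁ : r₁ ∈ X) (hp₂ : p₂ ∈ Y)
    (hr₂ : r₂ ∈ Y) :
    (q - 1) * (q - 2) * flow q (s(p₁, p₂) ::ₘ s(r₁, r₂) ::ₘ (M + N)) =
      flow q (s(h, p₁) ::ₘ s(h, r₁) ::ₘ M) * flow q (s(h, p₂) ::ₘ s(h, r₂) ::ₘ N)
      + (q - 1) * (flow q (s(p₁, r₁) ::ₘ M) * flow q (s(p₂, r₂) ::ₘ N))
      - flow q (s(p₁, r₁) ::ₘ M) * flow q (s(h, p₂) ::ₘ s(h, r₂) ::ₘ N)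
      - flow q (s(h, p₁) ::ₘ s(h, r₁) ::ₘ M) * flow q (s(p₂, r₂) ::ₘ N) := by
  simpa only [Multiset.add_cons, Multiset.cons_add, add_zero] using
    flow_add_cons_cons q hXY hM hN hp₁ hr₁ hp₂ hr₂

end FlowIdentities

theorem flow_two_edge_cut {V R : Type*} [Finite V] [CommRing R] (q : R) {X Y : Finset V}
    {M N : EdgeMultiset V} (hXY : Disjoint X Y) (hM : SupportedOn X M)
    (hN : SupportedOn Y N) {p₁ r₁ p₂ r₂ : V} (hp₁ : p₁ ∈ X) (hr₁ : r₁ ∈ X)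
    (hp₂ : p₂ ∈ Y) (hr₂ : r₂ ∈ Y) :
    (q - 1) * flow q (s(p₁, p₂) ::ₘ s(r₁, r₂) ::ₘ (M + N)) =
      flow q (s(p₁, r₁) ::ₘ M) * flow q (s(p₂, r₂) ::ₘ N) := by
  classical
  have hp₁Y : p₁ ∉ Y := Finset.disjoint_left.1 hXY hp₁
  have hinter : X ∩ insert p₁ Y = {p₁} := by
    rw [Finset.inter_insert_of_mem hp₁, Finset.disjoint_iff_inter_eq_empty.1 hXY]
    rfl
  have hN' : SupportedOn (insert p₁ Y) (s(p₁, p₂) ::ₘ N) :=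
    supportedOn_cons.2 ⟨by simp, by simp [hp₂], hN.mono (Finset.subset_insert _ _)⟩
  rw [Multiset.cons_swap, ← Multiset.add_cons,
    flow_cut_vertex_of_one_edge q hinter hM hN' hr₁ (Finset.mem_insert_of_mem hr₂),
    Multiset.cons_swap, flow_series q (ne_of_mem_of_not_mem hp₂ hp₁Y).symm
      (ne_of_mem_of_not_mem hr₂ hp₁Y).symm (hN.notMem hp₁Y)]

section Cuts

variable {V : Type*} {h a b v : V} {X Y S : Finset V} {M N : EdgeMultiset V}

/-- The edge `e` has exactly one end in `X`. -/
def Crosses (X : Finset V) (e : Sym2 V) : Prop := (∃ a ∈ e, a ∈ X) ∧ ∃ b ∈ e, b ∉ X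

theorem crosses_mk : Crosses X s(a, b) ↔ ¬(a ∈ X ↔ b ∈ X) := by
  simp only [Crosses, Sym2.mem_iff, exists_eq_or_imp, exists_eq_left]
  tauto

open scoped Classical in
/-- The number of edges of `M` leaving the vertex set `X`. -/
noncomputable def cut (X : Finset V) (M : EdgeMultiset V) : ℕ := M.countP (Crosses X)

@[simp]
theorem cut_zero (X : Finset V) : cut X 0 = 0 := by simp [cut]

theorem cut_add (X : Finset V) (M N : EdgeMultiset V) : cut X (M + N) = cut X M + cut X N := by
  simp [cut]

theorem cut_eq_zero (hM : SupportedOn S M) (hX : ∀ a ∈ S, ∀ b ∈ S, a ∈ X → b ∈ X) :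
    cut X M = 0 := by
  classical
  refine Multiset.countP_eq_zero.2 fun e he => ?_
  rintro ⟨⟨a, ha, haX⟩, b, hb, hbX⟩
  exact hbX (hX a (hM e he a ha) b (hM e he b hb) haX)

theorem cut_eq_card (hM : ∀ e ∈ M, Crosses X e) : cut X M = M.card := by
  classical exact Multiset.countP_eq_card.2 hM

theorem cut_congr (hM : SupportedOn S M)
    (hXY : ∀ a ∈ S, ∀ b ∈ S, (a ∈ X ↔ b ∈ X) ↔ (a ∈ Y ↔ b ∈ Y)) : cut X M = cut Y M := by
  classical
  refine Multiset.countP_congr rfl fun e he => ?_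
  induction e with | _ a b =>
  rw [crosses_mk, crosses_mk, hXY a (hM _ he a (by simp)) b (hM _ he b (by simp))]

theorem exists_cons_of_cut_pos (hX : 0 < cut X M) :
    ∃ a ∈ X, ∃ b ∉ X, ∃ N, M = s(a, b) ::ₘ N := by
  classical
  obtain ⟨e, he, ⟨a, ha, haX⟩, b, hb, hbX⟩ := Multiset.countP_pos.1 hX
  have hab : a ≠ b := by rintro rfl; exact hbX haX
  rw [(Sym2.mem_and_mem_iff hab).1 ⟨ha, hb⟩] at he
  exact ⟨a, haX, b, hbX, Multiset.exists_cons_of_mem he⟩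

variable [DecidableEq V]

theorem cut_cons (X : Finset V) (a b : V) (M : EdgeMultiset V) :
    cut X (s(a, b) ::ₘ M) = (if a ∈ X ↔ b ∈ X then 0 else 1) + cut X M := by
  simp only [cut, Multiset.countP_cons, crosses_mk, ite_not, add_comm]

/-- The number of edges of `M` leaving the vertex set `X` and not incident with the hub `h`. -/
noncomputable def innerCut (h : V) (X : Finset V) (M : EdgeMultiset V) : ℕ :=
  cut X (M.filter (h ∉ ·))

theorem innerCut_cons (h : V) (X : Finset V) (a b : V) (M : EdgeMultiset V) :
    innerCut h X (s(a, b) ::ₘ M) =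
      (if (a ∈ X ↔ b ∈ X) ∨ a = h ∨ b = h then 0 else 1) + innerCut h X M := by
  by_cases hab : h ∈ s(a, b)
  · have := Sym2.mem_iff.1 hab
    rw [innerCut, Multiset.filter_cons_of_neg M (not_not.2 hab), if_pos (by grind), zero_add,
      innerCut]
  · rw [innerCut, Multiset.filter_cons_of_pos M hab, cut_cons, innerCut]
    simp only [Sym2.mem_iff, not_or] at hab
    grind

theorem innerCut_add (h : V) (X : Finset V) (M N : EdgeMultiset V) :
    innerCut h X (M + N) = innerCut h X M + innerCut h X N := by
  rw [innerCut, Multiset.filter_add, cut_add, innerCut, innerCut]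

theorem innerCut_le_cut (h : V) (X : Finset V) (M : EdgeMultiset V) :
    innerCut h X M ≤ cut X M := by
  classical exact Multiset.countP_le_of_le _ (Multiset.filter_le _ M)

theorem innerCut_eq_cut (hM : ∀ e ∈ M, h ∉ e) (X : Finset V) : innerCut h X M = cut X M := by
  rw [innerCut, Multiset.filter_eq_self.2 hM]

theorem SupportedOn.filter_notMem (hM : SupportedOn (insert h S) M) :
    SupportedOn S (M.filter (h ∉ ·)) := by
  intro e he v hv
  obtain ⟨heM, hhe⟩ := Multiset.mem_filter.1 he
  exact Finset.mem_of_mem_insert_of_ne (hM e heM v hv) (by rintro rfl; exact hhe hv)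

theorem innerCut_eq_zero (hM : SupportedOn (insert h S) M)
    (hX : ∀ a ∈ S, ∀ b ∈ S, a ∈ X → b ∈ X) : innerCut h X M = 0 :=
  cut_eq_zero hM.filter_notMem hX

theorem innerCut_congr (hM : SupportedOn (insert h S) M)
    (hXY : ∀ a ∈ S, ∀ b ∈ S, (a ∈ X ↔ b ∈ X) ↔ (a ∈ Y ↔ b ∈ Y)) :
    innerCut h X M = innerCut h Y M :=
  cut_congr hM.filter_notMem hXY

theorem exists_cons_of_innerCut_pos (hX : 0 < innerCut h X M) :
    ∃ a ∈ X, ∃ b ∉ X, b ≠ h ∧ ∃ N, M = s(a, b) ::ₘ N := by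
  obtain ⟨a, ha, b, hb, N, hN⟩ := exists_cons_of_cut_pos hX
  obtain ⟨heM, hhe⟩ := Multiset.mem_filter.1 (hN ▸ Multiset.mem_cons_self s(a, b) N)
  exact ⟨a, ha, b, hb, by rintro rfl; simp at hhe, Multiset.exists_cons_of_mem heM⟩

theorem exists_eq_add_add_of_supportedOn_union (hM : SupportedOn (X ∪ Y) M) :
    ∃ R M₁ M₂, M = R + (M₁ + M₂) ∧ SupportedOn X M₁ ∧ SupportedOn Y M₂ ∧
      ∀ e ∈ R, ∃ a ∈ X \ Y, ∃ b ∈ Y \ X, e = s(a, b) := by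
  classical
  refine ⟨(M.filter (¬∀ v ∈ ·, v ∈ X)).filter (¬∀ v ∈ ·, v ∈ Y), M.filter (∀ v ∈ ·, v ∈ X),
    (M.filter (¬∀ v ∈ ·, v ∈ X)).filter (∀ v ∈ ·, v ∈ Y), ?_,
    fun e he => (Multiset.mem_filter.1 he).2, fun e he => (Multiset.mem_filter.1 he).2, ?_⟩
  · rw [add_left_comm, add_comm (Multiset.filter _ (Multiset.filter _ M)),
      Multiset.filter_add_not, Multiset.filter_add_not]
  · intro e he
    obtain ⟨he', heY⟩ := Multiset.mem_filter.1 he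
    obtain ⟨heM, heX⟩ := Multiset.mem_filter.1 he'
    push Not at heX heY
    obtain ⟨⟨b, hb, hbX⟩, a, ha, haY⟩ := heX, heY
    have haM := hM e heM a ha
    have hbM := hM e heM b hb
    have hab : a ≠ b := by grind
    exact ⟨a, by grind, b, by grind, (Sym2.mem_and_mem_iff hab).1 ⟨ha, hb⟩⟩

theorem exists_split_of_innerCut (hX : h ∉ X) (hXY : Disjoint X Y)
    (hM : SupportedOn (insert h (X ∪ Y)) M) :
    ∃ R M₁ M₂, M = R + (M₁ + M₂) ∧ SupportedOn (insert h X) M₁ ∧ SupportedOn (insert h Y) M₂ ∧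
      R.card = innerCut h X M ∧ ∀ e ∈ R, ∃ a ∈ X, ∃ b ∈ Y, e = s(a, b) := by
  rw [Finset.insert_union_distrib] at hM
  obtain ⟨R, M₁, M₂, rfl, h₁, h₂, hR⟩ := exists_eq_add_add_of_supportedOn_union hM
  have hXY' := Finset.disjoint_left.1 hXY
  have hR' : ∀ e ∈ R, ∃ a ∈ X, ∃ b ∈ Y, h ≠ b ∧ e = s(a, b) := by
    intro e he
    obtain ⟨a, ha, b, hb, rfl⟩ := hR e he
    exact ⟨a, by grind, b, by grind, by grind, rfl⟩
  refine ⟨R, M₁, M₂, rfl, h₁, h₂, ?_, fun e he => ?_⟩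
  · rw [innerCut_add, innerCut_add, innerCut_eq_zero h₁ (by grind), innerCut_eq_zero h₂ (by grind),
      innerCut_eq_cut, cut_eq_card]
    · rfl
    all_goals
      intro e he
      obtain ⟨a, ha, b, hb, hhb, rfl⟩ := hR' e he
      grind [crosses_mk]
  · obtain ⟨a, ha, b, hb, -, rfl⟩ := hR' e he
    exact ⟨a, ha, b, hb, rfl⟩

theorem exists_split_of_innerCut_eq_zero (hX : h ∉ X) (hXY : Disjoint X Y)
    (hM : SupportedOn (insert h (X ∪ Y)) M) (hcut : innerCut h X M = 0) :
    ∃ M₁ M₂, M = M₁ + M₂ ∧ SupportedOn (insert h X) M₁ ∧ SupportedOn (insert h Y) M₂ := by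
  obtain ⟨R, M₁, M₂, rfl, h₁, h₂, hR, -⟩ := exists_split_of_innerCut hX hXY hM
  rw [hcut, Multiset.card_eq_zero] at hR
  exact ⟨M₁, M₂, by rw [hR, zero_add], h₁, h₂⟩

theorem exists_split_of_innerCut_eq_one (hX : h ∉ X) (hXY : Disjoint X Y)
    (hM : SupportedOn (insert h (X ∪ Y)) M) (hcut : innerCut h X M = 1) :
    ∃ p ∈ X, ∃ r ∈ Y, ∃ M₁ M₂, M = s(p, r) ::ₘ (M₁ + M₂) ∧
      SupportedOn (insert h X) M₁ ∧ SupportedOn (insert h Y) M₂ := by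
  obtain ⟨R, M₁, M₂, rfl, h₁, h₂, hR, hR'⟩ := exists_split_of_innerCut hX hXY hM
  rw [hcut, Multiset.card_eq_one] at hR
  obtain ⟨e, rfl⟩ := hR
  obtain ⟨p, hp, r, hr, rfl⟩ := hR' e (Multiset.mem_singleton_self e)
  exact ⟨p, hp, r, hr, M₁, M₂, Multiset.singleton_add _ _, h₁, h₂⟩

theorem exists_split_of_cut_eq_two (hXS : X ⊆ S) (hM : SupportedOn S M) (hcut : cut X M = 2) :
    ∃ p₁ ∈ X, ∃ p₂ ∈ S \ X, ∃ r₁ ∈ X, ∃ r₂ ∈ S \ X, ∃ M₁ M₂,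
      M = s(p₁, p₂) ::ₘ s(r₁, r₂) ::ₘ (M₁ + M₂) ∧ SupportedOn X M₁ ∧ SupportedOn (S \ X) M₂ := by
  rw [← Finset.union_sdiff_of_subset hXS] at hM
  obtain ⟨R, M₁, M₂, rfl, h₁, h₂, hR⟩ := exists_eq_add_add_of_supportedOn_union hM
  have hcard : R.card = 2 := by
    rw [← hcut, cut_add, cut_add, cut_eq_zero h₁ (by grind), cut_eq_zero h₂ (by grind),
      cut_eq_card]
    · rfl
    · intro e he
      obtain ⟨a, ha, b, hb, rfl⟩ := hR e he
      grind [crosses_mk]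
  obtain ⟨e, e', rfl⟩ := Multiset.card_eq_two.1 hcard
  obtain ⟨p₁, hp₁, p₂, hp₂, rfl⟩ := hR e (by simp)
  obtain ⟨r₁, hr₁, r₂, hr₂, rfl⟩ := hR e' (by simp)
  refine ⟨p₁, by grind, p₂, by grind, r₁, by grind, r₂, by grind, M₁, M₂, ?_, h₁, h₂⟩
  simp only [Multiset.insert_eq_cons, Multiset.cons_add, Multiset.singleton_add]

/-- The degree of `v` in `M`; a loop counts twice. -/
def degree (v : V) (M : EdgeMultiset V) : ℕ := (M.bind Sym2.toMultiset).count v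

@[simp]
theorem degree_zero (v : V) : degree v 0 = 0 := rfl

theorem degree_cons (v a b : V) (M : EdgeMultiset V) :
    degree v (s(a, b) ::ₘ M) =
      (if a = v then 1 else 0) + (if b = v then 1 else 0) + degree v M := by
  simp [degree, Sym2.toMultiset, List.count_cons, add_comm]

theorem degree_add (v : V) (M N : EdgeMultiset V) : degree v (M + N) = degree v M + degree v N := by
  rw [degree, Multiset.add_bind, Multiset.count_add, degree, degree]

theorem degree_eq_zero : degree v M = 0 ↔ ∀ e ∈ M, v ∉ e := by
  simp [degree, Multiset.count_eq_zero]

theorem degree_eq_zero_of_supportedOn (hM : SupportedOn S M) (hv : v ∉ S) : degree v M = 0 :=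
  degree_eq_zero.2 (hM.notMem hv)

theorem cut_singleton_le_degree (v : V) (M : EdgeMultiset V) : cut {v} M ≤ degree v M := by
  induction M using Multiset.induction with
  | empty => simp
  | cons e M ih =>
    induction e with | _ a b =>
    rw [cut_cons, degree_cons]
    simp only [Finset.mem_singleton]
    grind

theorem SupportedOn.erase (hM : SupportedOn S M) (hv : degree v M = 0) :
    SupportedOn (S.erase v) M := fun e he _ hx =>
  Finset.mem_erase.2 ⟨by rintro rfl; exact degree_eq_zero.1 hv e he hx, hM e he _ hx⟩

end Cuts

section Numerics

/-- The constants of the argument at the point `q = s + 2`: the inequality `s ≤ t ^ 2` says that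
`q` is at most the root `α₂`. The value of `t` is the one for which the estimate at a two-edge cut,
`sq_mul_rho_le`, amounts to `s ≤ t ^ 2`, and `ρ` is the maximum of `|s - r| / (s * (1 + r))` over
`r ∈ [-t ^ 2, t]`, attained at `r = -t ^ 2`. -/
structure FlowParams (s t ρ : ℝ) : Prop where
  s_pos : 0 < s
  t_pos : 0 < t
  two_mul_t : 2 * t = 1 - s ^ 2
  s_le_sq : s ≤ t ^ 2
  rho_mul : ρ * (s * (1 - t ^ 2)) = s + t ^ 2

variable {s t ρ : ℝ}

namespace FlowParams

theorem t_le (P : FlowParams s t ρ) : t ≤ 1 / 2 := by nlinarith [P.two_mul_t, sq_nonneg s]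

theorem s_le (P : FlowParams s t ρ) : s ≤ 1 / 4 := by nlinarith [P.t_le, P.t_pos, P.s_le_sq]

theorem s_le_t (P : FlowParams s t ρ) : s ≤ t := by nlinarith [P.t_le, P.t_pos, P.s_le_sq]

theorem rho_mul_s_mul (P : FlowParams s t ρ) : ρ * s * (1 + t) * (1 - t) = s + t ^ 2 := by
  rw [← P.rho_mul]; ring

theorem rho_pos (P : FlowParams s t ρ) : 0 < ρ := by
  have hs := P.s_pos
  have ht : 0 < 1 - t ^ 2 := by nlinarith [P.t_le, P.t_pos]
  have h : 0 < ρ * (s * (1 - t ^ 2)) := by rw [P.rho_mul]; positivity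
  exact pos_of_mul_pos_left h (by positivity)

theorem rho_mul_s_le_one (P : FlowParams s t ρ) : ρ * s ≤ 1 := by
  have h : ρ * s * (1 - t ^ 2) ≤ 1 * (1 - t ^ 2) := by
    nlinarith [P.rho_mul_s_mul, P.t_le, P.t_pos, P.s_le]
  exact le_of_mul_le_mul_right h (by nlinarith [P.t_le, P.t_pos])

theorem sq_mul_rho_le (P : FlowParams s t ρ) : s ^ 2 * (1 + t) * ρ ≤ (t - s) * (1 - s) := by
  have h : s ^ 2 * (1 + t) * ρ * (1 - t) ≤ (t - s) * (1 - s) * (1 - t) :=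
    calc s ^ 2 * (1 + t) * ρ * (1 - t) = s * (s + t ^ 2) := by rw [← P.rho_mul_s_mul]; ring
      _ ≤ s * (s + t ^ 2) + (t ^ 2 - s) := by linarith [P.s_le_sq]
      _ = (t - s) * (1 - s) * (1 - t) := by linear_combination t * P.two_mul_t
  exact le_of_mul_le_mul_right h (by linarith [P.t_le])

theorem abs_sub_le (P : FlowParams s t ρ) {r : ℝ} (hr : r ∈ Set.Icc (-t ^ 2) t) :
    |s - r| ≤ ρ * (s * (1 + r)) := by
  have hρ := P.rho_mul_s_mul
  rw [abs_le]
  constructor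
  · have hst : (t - s) * (1 - t) ≤ ρ * s * (1 + t) * (1 - t) := by
      have := mul_pos P.s_pos P.t_pos
      nlinarith [P.two_mul_t, P.t_le, P.s_le, P.s_pos]
    have := le_of_mul_le_mul_right hst (by linarith [P.t_le])
    nlinarith [mul_le_mul_of_nonneg_right hr.2 (sub_nonneg.2 P.rho_mul_s_le_one)]
  · have : 0 ≤ 1 + ρ * s := by linarith [mul_pos P.rho_pos P.s_pos]
    nlinarith [mul_le_mul_of_nonneg_right hr.1 this]

end FlowParams

/-- The bound carried through the induction for a net with `k` edges to the hub: `c` and `e` are the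
signed flow polynomials obtained by attaching both terminals to the hub, resp. by joining them, and
`r` measures their ratio. -/
def NetBound (s t : ℝ) (k : ℕ) (c e : ℝ) : Prop :=
  ∃ g > 0, ∃ r ∈ Set.Icc (-t ^ 2) t, c = (1 + s) * r * g ∧ e = (s - r) * g ∧
    (k = 1 → r = s) ∧ (k = 2 → |s - r| * (1 - s) ≤ s * (1 + r))

namespace NetBound

variable {k k₁ k₂ : ℕ} {c c₁ c₂ e e₁ e₂ f₁ f₂ : ℝ}

theorem add_pos (P : FlowParams s t ρ) (h : NetBound s t k c e) : 0 < c + e := by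
  obtain ⟨g, hg, r, hr, rfl, rfl, -, -⟩ := h
  have h₁ : 0 < 1 + r := by nlinarith [hr.1, P.t_le, P.t_pos]
  have h₂ := mul_pos (mul_pos P.s_pos h₁) hg
  linarith

theorem abs_le (P : FlowParams s t ρ) (h : NetBound s t k c e) : |e| ≤ ρ * (c + e) := by
  obtain ⟨g, hg, r, hr, rfl, rfl, -, -⟩ := h
  rw [abs_mul, abs_of_pos hg]
  linarith [mul_le_mul_of_nonneg_right (P.abs_sub_le hr) hg.le]

theorem abs_mul_le (h : NetBound s t 2 c e) : |e| * (1 - s) ≤ c + e := by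
  obtain ⟨g, hg, r, -, rfl, rfl, -, h₂⟩ := h
  rw [abs_mul, abs_of_pos hg]
  linarith [mul_le_mul_of_nonneg_right (h₂ rfl) hg.le]

theorem of_eq_zero (P : FlowParams s t ρ) (hc : 0 < c) : NetBound s t 1 c 0 := by
  have hs := P.s_pos
  refine ⟨c / ((1 + s) * s), by positivity, s, ⟨by nlinarith, P.s_le_t⟩, by field_simp, by simp,
    fun _ => rfl, by simp⟩

theorem of_pos (P : FlowParams s t ρ) (hk : k ≠ 1) (hc : 0 < c)
    (he : (1 + s) * t * -e ≤ (t - s) * c) (hk₂ : k = 2 → |e| * (1 - s) ≤ c + e) :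
    NetBound s t k c e := by
  have hs := P.s_pos
  obtain ⟨f, rfl⟩ : ∃ f, c = (1 + s) * f := ⟨c / (1 + s), by field_simp⟩
  obtain ⟨g, rfl⟩ : ∃ g, e = s * g - f := ⟨(e + f) / s, by field_simp; ring⟩
  have hf : 0 < f := pos_of_mul_pos_right hc (by positivity)
  have hfg : f ≤ t * g := by
    refine le_of_mul_le_mul_left ?_ (mul_pos (by positivity : 0 < 1 + s) hs)
    linarith
  have hg : 0 < g := pos_of_mul_pos_right (hf.trans_le hfg) P.t_pos.le
  obtain ⟨r, rfl⟩ : ∃ r, f = r * g := ⟨f / g, by field_simp⟩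
  have hr : 0 < r := pos_of_mul_pos_left hf hg.le
  refine ⟨g, hg, r, ⟨by nlinarith, le_of_mul_le_mul_right hfg hg⟩, by ring, by ring,
    fun h => absurd h hk, fun h => le_of_mul_le_mul_right ?_ hg⟩
  have := hk₂ h
  rw [← sub_mul, abs_mul, abs_of_pos hg] at this
  linarith

theorem of_nonneg (P : FlowParams s t ρ) (hk : k ≠ 1) (hc : 0 < c) (he : 0 ≤ e) :
    NetBound s t k c e := by
  refine of_pos P hk hc ?_ fun _ => ?_
  · have h₁ : 0 ≤ (1 + s) * t * e := by have := P.s_pos; have := P.t_pos; positivity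
    have h₂ := mul_nonneg (sub_nonneg.2 P.s_le_t) hc.le
    linarith
  · rw [abs_of_nonneg he]
    nlinarith [P.s_pos]

/-- Splitting a net at an inner cut of size one multiplies the ratios `r`, up to sign. -/
theorem mul (P : FlowParams s t ρ) (h₁ : NetBound s t k₁ c₁ e₁) (h₂ : NetBound s t k₂ c₂ e₂)
    (hk₁ : k₁ ≠ 0) (hk₂ : k₂ ≠ 0) (hc : (1 + s) * c = -(c₁ * c₂))
    (he : (1 + s) * s * e = c₁ * c₂ + (1 + s) * (e₁ * e₂) + e₁ * c₂ + c₁ * e₂) :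
    NetBound s t (k₁ + k₂) c e := by
  obtain ⟨g₁, hg₁, r₁, hr₁, rfl, rfl, hone₁, -⟩ := h₁
  obtain ⟨g₂, hg₂, r₂, hr₂, rfl, rfl, hone₂, -⟩ := h₂
  have hs := P.s_pos
  have ht := P.t_pos
  have ht2 : t ^ 2 ≤ t := by nlinarith [P.t_le]
  have hr₁' : |r₁| ≤ t := _root_.abs_le.2 ⟨by linarith [hr₁.1], hr₁.2⟩
  have hr₂' : |r₂| ≤ t := _root_.abs_le.2 ⟨by linarith [hr₂.1], hr₂.2⟩
  have hr : r₁ * r₂ ≤ t ^ 2 := by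
    nlinarith [le_abs_self (r₁ * r₂), abs_mul r₁ r₂,
      mul_le_mul hr₁' hr₂' (abs_nonneg _) ht.le]
  have hr' : -(r₁ * r₂) ≤ t := by
    nlinarith [neg_abs_le (r₁ * r₂), abs_mul r₁ r₂,
      mul_le_mul hr₁' hr₂' (abs_nonneg _) ht.le]
  refine ⟨g₁ * g₂, mul_pos hg₁ hg₂, -(r₁ * r₂), ⟨by linarith, hr'⟩, ?_, ?_, by omega, fun h => ?_⟩
  · refine mul_left_cancel₀ (by positivity : 1 + s ≠ 0) (hc.trans ?_)
    ring
  · refine mul_left_cancel₀ (by positivity : (1 + s) * s ≠ 0) (he.trans ?_)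
    ring
  · rw [hone₁ (by omega), hone₂ (by omega), abs_of_pos (by nlinarith)]
    apply le_of_eq
    ring

theorem of_two_edge_cut (P : FlowParams s t ρ) (hk : k ≠ 1) (hc : 0 < c) (hf₁ : 0 < f₁)
    (hf₂ : 0 < f₂) (hce : (1 + s) * s * c = f₁ * f₂ + s * (e₁ * e₂)) (he : (1 + s) * -e = e₁ * e₂)
    (h₁ : |e₁| * (1 - s) ≤ f₁) (h₂ : |e₂| ≤ ρ * f₂) (hk₂ : k = 2 → |e₂| * (1 - s) ≤ f₂) :
    NetBound s t k c e := by
  have hs := P.s_pos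
  have hs' := P.s_le
  have ht := P.t_pos
  have hff : (1 + s) * s * (c + e) = f₁ * f₂ := by linear_combination hce - s * he
  have hss : 0 < (1 + s) * s := by positivity
  refine of_pos P hk hc ?_ fun h => ?_
  · have hρ : e₁ * e₂ * (1 - s) ≤ ρ * (f₁ * f₂) :=
      calc e₁ * e₂ * (1 - s) ≤ |e₁| * |e₂| * (1 - s) := by
            rw [← abs_mul]
            exact mul_le_mul_of_nonneg_right (le_abs_self _) (by linarith)
        _ = |e₁| * (1 - s) * |e₂| := by ring
        _ ≤ f₁ * (ρ * f₂) := mul_le_mul h₁ h₂ (abs_nonneg _) hf₁.le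
        _ = ρ * (f₁ * f₂) := by ring
    have hkey : s ^ 2 * (1 + t) * (e₁ * e₂) * (1 - s) ≤ (t - s) * (f₁ * f₂) * (1 - s) :=
      calc s ^ 2 * (1 + t) * (e₁ * e₂) * (1 - s)
          = s ^ 2 * (1 + t) * (e₁ * e₂ * (1 - s)) := by ring
        _ ≤ s ^ 2 * (1 + t) * (ρ * (f₁ * f₂)) :=
            mul_le_mul_of_nonneg_left hρ (by positivity)
        _ = s ^ 2 * (1 + t) * ρ * (f₁ * f₂) := by ring
        _ ≤ (t - s) * (1 - s) * (f₁ * f₂) :=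
            mul_le_mul_of_nonneg_right P.sq_mul_rho_le (by positivity)
        _ = (t - s) * (f₁ * f₂) * (1 - s) := by ring
    have := le_of_mul_le_mul_right hkey (by linarith)
    rw [← hff, ← he] at this
    refine le_of_mul_le_mul_left ?_ hss
    linarith
  · have hprod : (1 + s) * |e| * (1 - s) ^ 2 ≤ f₁ * f₂ :=
      calc (1 + s) * |e| * (1 - s) ^ 2 = |(1 + s) * -e| * (1 - s) ^ 2 := by
            rw [abs_mul, abs_neg, abs_of_pos (by positivity : 0 < 1 + s)]
        _ = |e₁| * (1 - s) * (|e₂| * (1 - s)) := by rw [he, abs_mul]; ring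
        _ ≤ f₁ * f₂ := mul_le_mul h₁ (hk₂ h) (mul_nonneg (abs_nonneg _) (by linarith)) hf₁.le
    refine le_of_mul_le_mul_left ?_ hss
    have h₀ : 0 ≤ (1 + s) * |e| * (1 - s) :=
      mul_nonneg (by positivity) (by linarith)
    nlinarith [mul_le_mul_of_nonneg_left (by linarith : s ≤ 1 - s) h₀]

end NetBound

end Numerics

section Classes

variable {V : Type*} [DecidableEq V] {h a b p r x p₁ p₂ r₁ r₂ : V} {W X Y Z : Finset V}
  {M M₁ M₂ : EdgeMultiset V}

/-- The near-cubic graphs with hub `h` and set `W` of cubic vertices that admit no reduction along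
a small cut: there are at least two edges at the hub, every set of cubic vertices other than `W` is
left by at least three edges, and by at least two that avoid the hub. -/
structure IsReduced (h : V) (W : Finset V) (M : EdgeMultiset V) : Prop where
  hub_notMem : h ∉ W
  supportedOn : SupportedOn (insert h W) M
  loop_notMem : s(h, h) ∉ M
  nonempty : W.Nonempty
  degree_eq : ∀ w ∈ W, degree w M = 3
  three_le_cut : ∀ X ⊂ W, X.Nonempty → 3 ≤ cut X M
  two_le_innerCut : ∀ X ⊂ W, X.Nonempty → 2 ≤ innerCut h X M
  two_le_cut : 2 ≤ cut W M

/-- A net is what remains of a reduced graph when a cubic vertex adjacent to the hub is deleted;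
its terminals `a` and `b` are the other two neighbours of the deleted vertex. -/
structure IsNet (h : V) (W : Finset V) (M : EdgeMultiset V) (a b : V) : Prop where
  hub_notMem : h ∉ W
  supportedOn : SupportedOn (insert h W) M
  loop_notMem : s(h, h) ∉ M
  left_mem : a ∈ W
  right_mem : b ∈ W
  degree_eq : ∀ w ∈ W, degree w (s(h, a) ::ₘ s(h, b) ::ₘ M) = 3
  three_le_cut : ∀ X ⊆ W, X.Nonempty → 3 ≤ cut X (s(h, a) ::ₘ s(h, b) ::ₘ M)
  two_le_innerCut : ∀ X ⊂ W, X.Nonempty → 2 ≤ innerCut h X (s(a, b) ::ₘ M)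

theorem union_ssubset_union (hXY : Disjoint X Y) (hZ : Z ⊂ X) : Z ∪ Y ⊂ X ∪ Y := by
  obtain ⟨v, hv, hvZ⟩ := Finset.exists_of_ssubset hZ
  have hvY := Finset.disjoint_left.1 hXY hv
  exact (Finset.ssubset_iff_of_subset (Finset.union_subset_union_left hZ.subset)).2
    ⟨v, by grind, by grind⟩

namespace IsNet

theorem symm (N : IsNet h W M a b) : IsNet h W M b a where
  __ := N
  left_mem := N.right_mem
  right_mem := N.left_mem
  degree_eq := by rw [Multiset.cons_swap]; exact N.degree_eq
  three_le_cut := by rw [Multiset.cons_swap]; exact N.three_le_cut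
  two_le_innerCut := by rw [Sym2.eq_swap]; exact N.two_le_innerCut

theorem cut_pos (N : IsNet h W M a b) : 0 < cut W M := by
  have := N.three_le_cut W subset_rfl ⟨a, N.left_mem⟩
  simp only [cut_cons] at this
  grind

theorem exists_split_of_innerCut_lt_two (N : IsNet h W M a b) (hX : X ⊂ W) (hX' : X.Nonempty)
    (hcut : innerCut h X M < 2) :
    ∃ X Y, Disjoint X Y ∧ X ∪ Y = W ∧ a ∈ X ∧ b ∈ Y ∧ ∃ p ∈ X, ∃ r ∈ Y, ∃ M₁ M₂,
      M = s(p, r) ::ₘ (M₁ + M₂) ∧ SupportedOn (insert h X) M₁ ∧ SupportedOn (insert h Y) M₂ := by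
  have hinner := N.two_le_innerCut X hX hX'
  rw [innerCut_cons] at hinner
  have ⟨hcut₁, hab⟩ : innerCut h X M = 1 ∧ ¬(a ∈ X ↔ b ∈ X) := by grind
  have ⟨ha, hb, hXW⟩ := And.intro N.left_mem (And.intro N.right_mem hX.subset)
  obtain ⟨X, hXW, haX, hbX, hcut⟩ : ∃ X ⊆ W, a ∈ X ∧ b ∉ X ∧ innerCut h X M = 1 := by
    by_cases haX : a ∈ X
    · exact ⟨X, hXW, haX, by tauto, hcut₁⟩
    · refine ⟨W \ X, Finset.sdiff_subset, by grind, by grind, ?_⟩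
      rw [← hcut₁]
      exact innerCut_congr N.supportedOn (by grind)
  have hXY : Disjoint X (W \ X) := Finset.disjoint_sdiff
  have hM := N.supportedOn
  rw [← Finset.union_sdiff_of_subset hXW] at hM
  exact ⟨X, W \ X, hXY, Finset.union_sdiff_of_subset hXW, haX, by grind,
    exists_split_of_innerCut_eq_one (fun hh => N.hub_notMem (hXW hh)) hXY hM hcut⟩

theorem isReduced_attach (N : IsNet h W M a b)
    (hM : ∀ X ⊂ W, X.Nonempty → 2 ≤ innerCut h X M) :
    IsReduced h W (s(h, a) ::ₘ s(h, b) ::ₘ M) where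
  hub_notMem := N.hub_notMem
  supportedOn := by simp [supportedOn_cons, N.left_mem, N.right_mem, N.supportedOn]
  loop_notMem := by
    have := N.loop_notMem
    have := N.hub_notMem
    grind [N.left_mem, N.right_mem]
  nonempty := ⟨a, N.left_mem⟩
  degree_eq := N.degree_eq
  three_le_cut X hX := N.three_le_cut X hX.subset
  two_le_innerCut X hX hX' := by
    have := hM X hX hX'
    simp only [innerCut_cons]
    omega
  two_le_cut := (N.three_le_cut W subset_rfl ⟨a, N.left_mem⟩).trans' (by norm_num)

theorem isReduced_join (N : IsNet h W M a b)
    (hM : ∀ X ⊂ W, X.Nonempty → 3 ≤ cut X (s(a, b) ::ₘ M)) (hW : 2 ≤ cut W M) :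
    IsReduced h W (s(a, b) ::ₘ M) where
  hub_notMem := N.hub_notMem
  supportedOn := by simp [supportedOn_cons, N.left_mem, N.right_mem, N.supportedOn]
  loop_notMem := by
    have := N.loop_notMem
    have := N.hub_notMem
    grind [N.left_mem, N.right_mem]
  nonempty := ⟨a, N.left_mem⟩
  degree_eq w hw := by
    have := N.degree_eq w hw
    have := N.hub_notMem
    simp only [degree_cons] at *
    grind
  three_le_cut := hM
  two_le_innerCut := N.two_le_innerCut
  two_le_cut := by rw [cut_cons]; omega

theorem left_of_inner_edge (N : IsNet h (X ∪ Y) (s(p, r) ::ₘ (M₁ + M₂)) a b) (hXY : Disjoint X Y)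
    (ha : a ∈ X) (hb : b ∈ Y) (hp : p ∈ X) (hr : r ∈ Y) (h₁ : SupportedOn (insert h X) M₁)
    (h₂ : SupportedOn (insert h Y) M₂) : IsNet h X M₁ a p := by
  have hXY' := Finset.disjoint_left.1 hXY
  have hh := N.hub_notMem
  refine ⟨by grind, h₁, ?_, ha, hp, fun w hw => ?_, fun Z hZ hZ' => ?_, fun Z hZ hZ' => ?_⟩
  · have := N.loop_notMem
    grind
  · have hdeg := N.degree_eq w (by grind)
    have hdeg₂ := degree_eq_zero_of_supportedOn (v := w) h₂ (by grind)
    simp only [degree_cons, degree_add, hdeg₂] at hdeg ⊢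
    grind
  · have hcut := N.three_le_cut Z (by grind) hZ'
    have hcut₂ := cut_eq_zero (X := Z) h₂ (by grind)
    simp only [cut_cons, cut_add, hcut₂] at hcut ⊢
    grind
  · have hZX := hZ.subset
    have hinner_Z := N.two_le_innerCut Z (by grind) hZ'
    have hinner_ZY := N.two_le_innerCut (Z ∪ Y) (union_ssubset_union hXY hZ) (hZ'.mono (by simp))
    have hinner₂_Z := innerCut_eq_zero (X := Z) h₂ (by grind)
    have hinner₂_ZY := innerCut_eq_zero (X := Z ∪ Y) h₂ (by grind)
    have hinner₁_ZY := innerCut_congr (X := Z ∪ Y) (Y := Z) h₁ (by grind)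
    simp only [innerCut_cons, innerCut_add, hinner₂_Z, hinner₂_ZY, hinner₁_ZY]
      at hinner_Z hinner_ZY ⊢
    grind

theorem exists_split_of_cut_lt_three (N : IsNet h W M a b) (hX : X ⊂ W) (hX' : X.Nonempty)
    (hcut : cut X (s(a, b) ::ₘ M) < 3) :
    a ∈ X ∧ b ∈ X ∧ ∃ Y, Disjoint X Y ∧ X ∪ Y = W ∧
      ∃ p₁ ∈ X, ∃ p₂ ∈ Y, ∃ r₁ ∈ X, ∃ r₂ ∈ Y, ∃ M₁ M₂,
        M = s(p₁, p₂) ::ₘ s(r₁, r₂) ::ₘ (M₁ + M₂) ∧ SupportedOn X M₁ ∧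
          SupportedOn (insert h Y) M₂ := by
  have hhX : h ∉ X := fun hh => N.hub_notMem (hX.subset hh)
  have hcut_attach := N.three_le_cut X hX.subset hX'
  have hinner_join := N.two_le_innerCut X hX hX'
  have hle := innerCut_le_cut h X M
  have ⟨ha, hb, hcut₂, hinner⟩ : a ∈ X ∧ b ∈ X ∧ cut X M = 2 ∧ innerCut h X M = 2 := by
    simp only [cut_cons, innerCut_cons] at hcut_attach hinner_join hcut
    grind
  obtain ⟨p₁, hp₁, p₂, hp₂, r₁, hr₁, r₂, hr₂, M₁, M₂, rfl, hM₁, hM₂⟩ :=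
    exists_split_of_cut_eq_two (hX.subset.trans (Finset.subset_insert h W)) N.supportedOn hcut₂
  have hinner₁ := innerCut_eq_zero (X := X) (hM₁.mono (Finset.subset_insert h X)) (by grind)
  rw [Finset.insert_sdiff_of_notMem W hhX] at hp₂ hr₂ hM₂
  have hinner₂ := innerCut_eq_zero (X := X) hM₂ (by grind)
  simp only [innerCut_cons, innerCut_add, hinner₁, hinner₂] at hinner
  exact ⟨ha, hb, W \ X, Finset.disjoint_sdiff, Finset.union_sdiff_of_subset hX.subset, p₁, hp₁, p₂,
    by grind, r₁, hr₁, r₂, by grind, M₁, M₂, rfl, hM₁, hM₂⟩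

theorem inside_of_two_edge_cut
    (N : IsNet h (X ∪ Y) (s(p₁, p₂) ::ₘ s(r₁, r₂) ::ₘ (M₁ + M₂)) a b) (hXY : Disjoint X Y)
    (hN : ∀ Z ⊂ X ∪ Y, Z.Nonempty → 2 ≤ innerCut h Z (s(p₁, p₂) ::ₘ s(r₁, r₂) ::ₘ (M₁ + M₂)))
    (ha : a ∈ X) (hb : b ∈ X) (hp₁ : p₁ ∈ X) (hp₂ : p₂ ∈ Y) (hr₁ : r₁ ∈ X) (hr₂ : r₂ ∈ Y)
    (h₁ : SupportedOn X M₁) (h₂ : SupportedOn (insert h Y) M₂) :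
    IsNet h X (s(h, p₁) ::ₘ s(h, r₁) ::ₘ M₁) a b := by
  have hXY' := Finset.disjoint_left.1 hXY
  have hh := N.hub_notMem
  have h₁' := h₁.mono (Finset.subset_insert h X)
  refine ⟨by grind, by simp [supportedOn_cons, hp₁, hr₁, h₁'], ?_, ha, hb, fun w hw => ?_,
    fun Z hZ hZ' => ?_, fun Z hZ hZ' => ?_⟩
  · have := N.loop_notMem
    grind
  · have hdeg := N.degree_eq w (by grind)
    have hdeg₂ := degree_eq_zero_of_supportedOn (v := w) h₂ (by grind)
    simp only [degree_cons, degree_add, hdeg₂] at hdeg ⊢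
    grind
  · have hcut := N.three_le_cut Z (by grind) hZ'
    have hcut₂ := cut_eq_zero (X := Z) h₂ (by grind)
    simp only [cut_cons, cut_add, hcut₂] at hcut ⊢
    grind
  · have hZX := hZ.subset
    have hZc : X \ Z ⊂ X := Finset.sdiff_ssubset hZX hZ'
    have hZc' : (X \ Z).Nonempty := Finset.sdiff_nonempty.2 hZ.not_subset
    have hN_Z := hN Z (hZ.trans_subset Finset.subset_union_left) hZ'
    have hN_compl := hN (X \ Z) (hZc.trans_subset Finset.subset_union_left) hZc'
    have hcut_Z := N.three_le_cut Z (hZX.trans Finset.subset_union_left) hZ'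
    have hcut_compl := N.three_le_cut (X \ Z) (hZc.subset.trans Finset.subset_union_left) hZc'
    have hinner_Z := N.two_le_innerCut Z (hZ.trans_subset Finset.subset_union_left) hZ'
    have hcut₂_Z := cut_eq_zero (X := Z) h₂ (by grind)
    have hcut₂_compl := cut_eq_zero (X := X \ Z) h₂ (by grind)
    have hcut₁_compl := cut_congr (X := X \ Z) (Y := Z) h₁ (by grind)
    have hinner₁ := innerCut_eq_cut (h₁.notMem (b := h) (by grind))
    have hinner₂_Z := Nat.le_zero.1 (hcut₂_Z ▸ innerCut_le_cut h Z M₂)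
    have hinner₂_compl := Nat.le_zero.1 (hcut₂_compl ▸ innerCut_le_cut h (X \ Z) M₂)
    simp only [innerCut_cons, innerCut_add, cut_cons, cut_add, hcut₂_Z, hcut₂_compl,
      hcut₁_compl, hinner₁, hinner₂_Z, hinner₂_compl]
      at hN_Z hN_compl hcut_Z hcut_compl hinner_Z ⊢
    -- By `hN_Z` and `hN_compl` some edge of `M₁` crosses `Z`; if only one does, then exactly one
    -- of `p₁` and `r₁` is in `Z`, and one of `Z` and `X \ Z` contains neither `a` nor `b`, so that
    -- only two edges leave it.
    grind

theorem outside_of_two_edge_cut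
    (N : IsNet h (X ∪ Y) (s(p₁, p₂) ::ₘ s(r₁, r₂) ::ₘ (M₁ + M₂)) a b) (hXY : Disjoint X Y)
    (hN : ∀ Z ⊂ X ∪ Y, Z.Nonempty → 2 ≤ innerCut h Z (s(p₁, p₂) ::ₘ s(r₁, r₂) ::ₘ (M₁ + M₂)))
    (ha : a ∈ X) (hb : b ∈ X) (hp₁ : p₁ ∈ X) (hp₂ : p₂ ∈ Y) (hr₁ : r₁ ∈ X) (hr₂ : r₂ ∈ Y)
    (h₁ : SupportedOn X M₁) (h₂ : SupportedOn (insert h Y) M₂) :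
    IsNet h Y M₂ p₂ r₂ := by
  have hXY' := Finset.disjoint_left.1 hXY
  have hh := N.hub_notMem
  refine ⟨by grind, h₂, ?_, hp₂, hr₂, fun w hw => ?_, fun Z hZ hZ' => ?_, fun Z hZ hZ' => ?_⟩
  · have := N.loop_notMem
    grind
  · have hdeg := N.degree_eq w (by grind)
    have hdeg₁ := degree_eq_zero_of_supportedOn (v := w) h₁ (by grind)
    simp only [degree_cons, degree_add, hdeg₁] at hdeg ⊢
    grind
  · have hcut := N.three_le_cut Z (by grind) hZ'
    have hcut₁ := cut_eq_zero (X := Z) h₁ (by grind)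
    simp only [cut_cons, cut_add, hcut₁] at hcut ⊢
    grind
  · have hZY := hZ.subset
    have h₁' := h₁.mono (Finset.subset_insert h X)
    have hinner_Z := hN Z (hZ.trans_subset Finset.subset_union_right) hZ'
    have hinner_ZX := hN (Z ∪ X) (Finset.union_comm Y X ▸ union_ssubset_union hXY.symm hZ)
      (hZ'.mono (by simp))
    have hinner₁_Z := innerCut_eq_zero (X := Z) h₁' (by grind)
    have hinner₁_ZX := innerCut_eq_zero (X := Z ∪ X) h₁' (by grind)
    have hinner₂_ZX := innerCut_congr (X := Z ∪ X) (Y := Z) h₂ (by grind)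
    simp only [innerCut_cons, innerCut_add, hinner₁_Z, hinner₁_ZX, hinner₂_ZX]
      at hinner_Z hinner_ZX ⊢
    grind

end IsNet

namespace IsReduced

theorem exists_eq_cons (G : IsReduced h W M) (hW : W.Nontrivial) :
    ∃ x ∈ W, ∃ a b M', M = s(h, x) ::ₘ s(x, a) ::ₘ s(x, b) ::ₘ M' := by
  have hcut : 0 < cut W M := G.two_le_cut.trans_lt' (by norm_num)
  obtain ⟨x, hx, y, hy, M₁, rfl⟩ := exists_cons_of_cut_pos hcut
  obtain rfl : y = h := by
    have := G.supportedOn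
    grind [supportedOn_cons]
  have hinner := G.two_le_innerCut {x} (Finset.ssubset_iff_subset_ne.2
    ⟨Finset.singleton_subset_iff.2 hx, hW.ne_singleton.symm⟩) (by simp)
  rw [innerCut_cons, if_pos (by simp), zero_add] at hinner
  obtain ⟨x', hx', a, -, -, M₂, rfl⟩ :=
    exists_cons_of_innerCut_pos (hinner.trans_lt' (by norm_num))
  obtain rfl := Finset.mem_singleton.1 hx'
  rw [innerCut_cons] at hinner
  obtain ⟨x', hx', b, -, -, M₃, rfl⟩ :=
    exists_cons_of_innerCut_pos (h := y) (X := {x'}) (M := M₂) (by grind)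
  obtain rfl := Finset.mem_singleton.1 hx'
  exact ⟨x', hx, a, b, M₃, by rw [Sym2.eq_swap (a := y)]⟩

theorem isNet_erase (G : IsReduced h W (s(h, x) ::ₘ s(x, a) ::ₘ s(x, b) ::ₘ M)) (hx : x ∈ W)
    (hW : W.Nontrivial) : IsNet h (W.erase x) M a b := by
  have hh := G.hub_notMem
  have hxh : x ≠ h := by grind
  have hxW : {x} ⊂ W := Finset.ssubset_iff_subset_ne.2
    ⟨Finset.singleton_subset_iff.2 hx, hW.ne_singleton.symm⟩
  have hdeg := G.degree_eq x hx
  have hinner := G.two_le_innerCut {x} hxW (by simp)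
  have hM := G.supportedOn
  have hle := (innerCut_le_cut h {x} M).trans (cut_singleton_le_degree x M)
  simp only [degree_cons, innerCut_cons, supportedOn_cons, Finset.mem_singleton] at hdeg hinner hM
  have hdeg₀ : degree x M = 0 := by grind
  have ⟨hax, hbx, hah, hbh⟩ : a ≠ x ∧ b ≠ x ∧ a ≠ h ∧ b ≠ h := by grind
  have hM' := hM.2.2.2.2.2.2.erase hdeg₀
  rw [Finset.erase_insert_of_ne hxh.symm] at hM'
  refine ⟨by grind, hM', ?_, by grind, by grind, fun w hw => ?_, fun Z hZ hZ' => ?_,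
    fun Z hZ hZ' => ?_⟩
  · have := G.loop_notMem
    grind
  · have := G.degree_eq w (by grind)
    simp only [degree_cons] at this ⊢
    grind
  · have := G.three_le_cut Z (hZ.trans_ssubset (Finset.erase_ssubset hx)) hZ'
    simp only [cut_cons] at this ⊢
    grind
  · have hZx : x ∉ Z := fun hxZ => Finset.notMem_erase x W (hZ.subset hxZ)
    have hxZ : insert x Z ⊂ W := by
      obtain ⟨v, hv, hvZ⟩ := Finset.exists_of_ssubset hZ
      have hZW := hZ.subset
      exact (Finset.ssubset_iff_of_subset (by grind)).2 ⟨v, by grind, by grind⟩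
    have hinner_Z := G.two_le_innerCut Z (hZ.trans (Finset.erase_ssubset hx)) hZ'
    have hinner_xZ := G.two_le_innerCut (insert x Z) hxZ (by simp)
    have hinnerM_xZ := innerCut_congr (X := insert x Z) (Y := Z) hM' (by grind)
    simp only [innerCut_cons, hinnerM_xZ] at hinner_Z hinner_xZ ⊢
    grind

end IsReduced

end Classes

section SignedFlow

variable {V : Type*} {h a b p r x p₁ p₂ r₁ r₂ : V} {W X Y : Finset V}
  {M M₁ M₂ : EdgeMultiset V} {s : ℝ}

/-- The flow polynomial at `s + 2`, with the sign it is expected to have on a near-cubic graph with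
set `W` of cubic vertices. -/
noncomputable def signedFlow (s : ℝ) (W : Finset V) (M : EdgeMultiset V) : ℝ :=
  (-1) ^ (M.card + W.card) * flow (s + 2) M

theorem signedFlow_ne_zero : signedFlow s W M ≠ 0 ↔ flow (s + 2) M ≠ 0 := by
  simp [signedFlow]

variable [DecidableEq V] [Finite V]

theorem signedFlow_cubic_vertex (hxW : x ∈ W) (hh : x ≠ h) (ha : x ≠ a) (hb : x ≠ b)
    (hx : ∀ e ∈ M, x ∉ e) :
    signedFlow s W (s(h, x) ::ₘ s(x, a) ::ₘ s(x, b) ::ₘ M) =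
      signedFlow s (W.erase x) (s(h, a) ::ₘ s(h, b) ::ₘ M) +
        signedFlow s (W.erase x) (s(a, b) ::ₘ M) := by
  simp only [signedFlow, flow_cubic_vertex (s + 2) hh ha hb hx, Multiset.card_cons,
    ← Finset.card_erase_add_one hxW, pow_add]
  ring

theorem signedFlow_attach_inner_edge (hXY : Disjoint X Y) (h₁ : SupportedOn (insert h X) M₁)
    (h₂ : SupportedOn (insert h Y) M₂) (ha : a ∈ X) (hb : b ∈ Y) (hp : p ∈ X) (hr : r ∈ Y) :
    (1 + s) * signedFlow s (X ∪ Y) (s(h, a) ::ₘ s(h, b) ::ₘ s(p, r) ::ₘ (M₁ + M₂)) =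
      -(signedFlow s X (s(h, a) ::ₘ s(h, p) ::ₘ M₁) *
        signedFlow s Y (s(h, b) ::ₘ s(h, r) ::ₘ M₂)) := by
  have hsplit := flow_cut_vertex_of_one_edge (s + 2)
    (insert_inter_insert_of_disjoint hXY)
    (supportedOn_cons.2 ⟨Finset.mem_insert_self h X, Finset.mem_insert_of_mem ha, h₁⟩)
    (supportedOn_cons.2 ⟨Finset.mem_insert_self h Y, Finset.mem_insert_of_mem hb, h₂⟩)
    (Finset.mem_insert_of_mem hp) (Finset.mem_insert_of_mem hr)
  have hperm : s(p, r) ::ₘ (s(h, a) ::ₘ M₁ + s(h, b) ::ₘ M₂) =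
      s(h, a) ::ₘ s(h, b) ::ₘ s(p, r) ::ₘ (M₁ + M₂) := by
    simp only [← Multiset.singleton_add]; abel
  rw [hperm, Multiset.cons_swap s(h, p), Multiset.cons_swap s(h, r)] at hsplit
  simp only [signedFlow, Multiset.card_cons, Multiset.card_add,
    Finset.card_union_of_disjoint hXY, pow_add]
  linear_combination (-1) ^ (M₁.card + M₂.card + X.card + Y.card + 1) * hsplit

theorem signedFlow_join_inner_edge (hXY : Disjoint X Y) (h₁ : SupportedOn (insert h X) M₁)
    (h₂ : SupportedOn (insert h Y) M₂) (ha : a ∈ X) (hb : b ∈ Y) (hp : p ∈ X) (hr : r ∈ Y) :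
    (1 + s) * s * signedFlow s (X ∪ Y) (s(a, b) ::ₘ s(p, r) ::ₘ (M₁ + M₂)) =
      signedFlow s X (s(h, a) ::ₘ s(h, p) ::ₘ M₁) * signedFlow s Y (s(h, b) ::ₘ s(h, r) ::ₘ M₂) +
      (1 + s) * (signedFlow s X (s(a, p) ::ₘ M₁) * signedFlow s Y (s(b, r) ::ₘ M₂)) +
      signedFlow s X (s(a, p) ::ₘ M₁) * signedFlow s Y (s(h, b) ::ₘ s(h, r) ::ₘ M₂) +
      signedFlow s X (s(h, a) ::ₘ s(h, p) ::ₘ M₁) * signedFlow s Y (s(b, r) ::ₘ M₂) := by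
  have hsplit := flow_cut_vertex_of_two_edges (s + 2) (insert_inter_insert_of_disjoint hXY) h₁ h₂
    (Finset.mem_insert_of_mem ha) (Finset.mem_insert_of_mem hp) (Finset.mem_insert_of_mem hb)
    (Finset.mem_insert_of_mem hr)
  simp only [signedFlow, Multiset.card_cons, Multiset.card_add,
    Finset.card_union_of_disjoint hXY, pow_add]
  linear_combination (-1) ^ (M₁.card + M₂.card + X.card + Y.card) * hsplit

theorem signedFlow_attach_two_edge_cut (hX : h ∉ X) (hXY : Disjoint X Y) (h₁ : SupportedOn X M₁)
    (h₂ : SupportedOn (insert h Y) M₂) (ha : a ∈ X) (hb : b ∈ X) (hp₁ : p₁ ∈ X) (hp₂ : p₂ ∈ Y)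
    (hr₁ : r₁ ∈ X) (hr₂ : r₂ ∈ Y) :
    (1 + s) * s * signedFlow s (X ∪ Y)
        (s(h, a) ::ₘ s(h, b) ::ₘ s(p₁, p₂) ::ₘ s(r₁, r₂) ::ₘ (M₁ + M₂)) =
      (signedFlow s X (s(h, a) ::ₘ s(h, b) ::ₘ s(h, p₁) ::ₘ s(h, r₁) ::ₘ M₁) +
        signedFlow s X (s(a, b) ::ₘ s(h, p₁) ::ₘ s(h, r₁) ::ₘ M₁)) *
      (signedFlow s Y (s(h, p₂) ::ₘ s(h, r₂) ::ₘ M₂) + signedFlow s Y (s(p₂, r₂) ::ₘ M₂)) +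
      s * (signedFlow s X (s(a, b) ::ₘ s(h, p₁) ::ₘ s(h, r₁) ::ₘ M₁) *
        signedFlow s Y (s(p₂, r₂) ::ₘ M₂)) := by
  have hne {v : V} (hv : v ∈ X) : h ≠ v := (ne_of_mem_of_not_mem hv hX).symm
  have hsplit := flow_cut_vertex_of_two_edges (s + 2) (insert_inter_insert_of_disjoint hXY)
    (M := s(h, a) ::ₘ s(h, b) ::ₘ M₁)
    (by simp [supportedOn_cons, ha, hb, h₁.mono (Finset.subset_insert h X)]) h₂
    (Finset.mem_insert_of_mem hp₁) (Finset.mem_insert_of_mem hr₁) (Finset.mem_insert_of_mem hp₂)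
    (Finset.mem_insert_of_mem hr₂)
  have hhub_ab := flow_series (s + 2) (hne ha) (hne hb)
    (SupportedOn.notMem (supportedOn_cons.2 ⟨hp₁, hr₁, h₁⟩) hX)
  have hhub_pr := flow_series (s + 2) (hne hp₁) (hne hr₁)
    (SupportedOn.notMem (supportedOn_cons.2 ⟨ha, hb, h₁⟩) hX)
  have hperm₀ : s(p₁, p₂) ::ₘ s(r₁, r₂) ::ₘ (s(h, a) ::ₘ s(h, b) ::ₘ M₁ + M₂) =
      s(h, a) ::ₘ s(h, b) ::ₘ s(p₁, p₂) ::ₘ s(r₁, r₂) ::ₘ (M₁ + M₂) := by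
    simp only [← Multiset.singleton_add]; abel
  have hperm₁ : s(p₁, r₁) ::ₘ s(h, a) ::ₘ s(h, b) ::ₘ M₁ =
      s(h, a) ::ₘ s(h, b) ::ₘ s(p₁, r₁) ::ₘ M₁ := by
    simp only [← Multiset.singleton_add]; abel
  have hperm₂ : s(h, p₁) ::ₘ s(h, r₁) ::ₘ s(h, a) ::ₘ s(h, b) ::ₘ M₁ =
      s(h, a) ::ₘ s(h, b) ::ₘ s(h, p₁) ::ₘ s(h, r₁) ::ₘ M₁ := by
    simp only [← Multiset.singleton_add]; abel
  have hperm₃ : s(h, p₁) ::ₘ s(h, r₁) ::ₘ s(a, b) ::ₘ M₁ =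
      s(a, b) ::ₘ s(h, p₁) ::ₘ s(h, r₁) ::ₘ M₁ := by
    simp only [← Multiset.singleton_add]; abel
  rw [Multiset.cons_swap s(p₁, r₁), hperm₃] at hhub_pr
  rw [hperm₀, hperm₁, hperm₂, hhub_ab, ← hhub_pr] at hsplit
  simp only [signedFlow, Multiset.card_cons, Multiset.card_add,
    Finset.card_union_of_disjoint hXY, pow_add]
  linear_combination (-1) ^ (M₁.card + M₂.card + X.card + Y.card) * hsplit

theorem signedFlow_join_two_edge_cut (hX : h ∉ X) (hXY : Disjoint X Y) (h₁ : SupportedOn X M₁)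
    (h₂ : SupportedOn (insert h Y) M₂) (ha : a ∈ X) (hb : b ∈ X) (hp₁ : p₁ ∈ X) (hp₂ : p₂ ∈ Y)
    (hr₁ : r₁ ∈ X) (hr₂ : r₂ ∈ Y) :
    (1 + s) * -signedFlow s (X ∪ Y) (s(a, b) ::ₘ s(p₁, p₂) ::ₘ s(r₁, r₂) ::ₘ (M₁ + M₂)) =
      signedFlow s X (s(a, b) ::ₘ s(h, p₁) ::ₘ s(h, r₁) ::ₘ M₁) *
        signedFlow s Y (s(p₂, r₂) ::ₘ M₂) := by
  have hne {v : V} (hv : v ∈ X) : h ≠ v := (ne_of_mem_of_not_mem hv hX).symm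
  have hab : SupportedOn X (s(a, b) ::ₘ M₁) := supportedOn_cons.2 ⟨ha, hb, h₁⟩
  have hsplit := flow_two_edge_cut (s + 2) (Finset.disjoint_insert_right.2 ⟨hX, hXY⟩) hab h₂ hp₁ hr₁
    (Finset.mem_insert_of_mem hp₂) (Finset.mem_insert_of_mem hr₂)
  rw [← flow_series (s + 2) (hne hp₁) (hne hr₁) (hab.notMem hX)] at hsplit
  have hperm₁ : s(p₁, p₂) ::ₘ s(r₁, r₂) ::ₘ (s(a, b) ::ₘ M₁ + M₂) =
      s(a, b) ::ₘ s(p₁, p₂) ::ₘ s(r₁, r₂) ::ₘ (M₁ + M₂) := by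
    simp only [← Multiset.singleton_add]; abel
  have hperm₂ : s(h, p₁) ::ₘ s(h, r₁) ::ₘ s(a, b) ::ₘ M₁ =
      s(a, b) ::ₘ s(h, p₁) ::ₘ s(h, r₁) ::ₘ M₁ := by
    simp only [← Multiset.singleton_add]; abel
  rw [hperm₁, hperm₂] at hsplit
  simp only [signedFlow, Multiset.card_cons, Multiset.card_add,
    Finset.card_union_of_disjoint hXY, pow_add]
  linear_combination (-1) ^ (M₁.card + M₂.card + X.card + Y.card) * hsplit

end SignedFlow

section MainInduction

variable {V : Type*} [DecidableEq V] {h a b : V} {W X : Finset V}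
  {M : EdgeMultiset V} {s t ρ : ℝ}

/-- Every net with hub `h` and set `W` of cubic vertices satisfies `NetBound`, where the two flow
values are those of the graphs obtained by attaching both terminals to the hub and by joining the
terminals to each other. -/
def NetsBounded (s t : ℝ) (h : V) (W : Finset V) : Prop :=
  ∀ M a b, IsNet h W M a b →
    NetBound s t (cut W M) (signedFlow s W (s(h, a) ::ₘ s(h, b) ::ₘ M))
      (signedFlow s W (s(a, b) ::ₘ M))

theorem IsReduced.exists_eq_of_not_nontrivial (G : IsReduced h W M) (hW : ¬W.Nontrivial) :
    ∃ x, x ≠ h ∧ W = {x} ∧ M = s(h, x) ::ₘ s(x, h) ::ₘ s(x, h) ::ₘ 0 := by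
  obtain ⟨x, hx⟩ := G.nonempty
  obtain rfl := (Finset.eq_singleton_or_nontrivial hx).resolve_right hW
  have hxh : x ≠ h := ne_of_mem_of_not_mem hx G.hub_notMem
  have hM := G.supportedOn
  have hdeg := G.degree_eq x hx
  have hcut := G.two_le_cut
  obtain ⟨x, hx, y, hy, M, rfl⟩ := exists_cons_of_cut_pos (hcut.trans_lt' two_pos)
  obtain rfl := Finset.mem_singleton.1 hx
  rw [cut_cons] at hcut
  obtain ⟨x, hx, z, hz, M, rfl⟩ := exists_cons_of_cut_pos (X := {x}) (M := M) (by grind)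
  obtain rfl := Finset.mem_singleton.1 hx
  simp only [degree_cons] at hdeg
  obtain ⟨e, he, w, rfl⟩ : ∃ e ∈ M, x ∈ e := by
    by_contra! hM
    rw [degree_eq_zero.2 hM] at hdeg
    grind
  obtain ⟨M, rfl⟩ := Multiset.exists_cons_of_mem he
  rw [degree_cons] at hdeg
  simp only [supportedOn_cons, Finset.mem_insert, Finset.mem_singleton] at hM
  obtain ⟨rfl, rfl, rfl, hdeg₀⟩ : y = h ∧ z = h ∧ w = h ∧ degree x M = 0 := by grind
  have hM' := hM.2.2.2.2.2.2.erase hdeg₀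
  rw [Finset.erase_insert_of_ne hxh.symm, Finset.erase_singleton] at hM'
  have hM₀ := eq_zero_of_supportedOn_singleton hM' (by have := G.loop_notMem; grind)
  exact ⟨x, hxh, rfl, by rw [hM₀, Sym2.eq_swap (a := w) (b := x)]⟩

variable [Finite V]

theorem IsReduced.signedFlow_pos_of_netsBounded (P : FlowParams s t ρ) (G : IsReduced h W M)
    (ih : ∀ W' ⊂ W, NetsBounded s t h W') : 0 < signedFlow s W M := by
  by_cases hW : W.Nontrivial
  · obtain ⟨x, hx, a, b, M, rfl⟩ := G.exists_eq_cons hW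
    have N := G.isNet_erase hx hW
    have hxW : x ∉ W.erase x := Finset.notMem_erase x W
    have hxh : x ≠ h := ne_of_mem_of_not_mem hx G.hub_notMem
    rw [signedFlow_cubic_vertex hx hxh (ne_of_mem_of_not_mem N.left_mem hxW).symm
      (ne_of_mem_of_not_mem N.right_mem hxW).symm (N.supportedOn.notMem (by simp [hxh]))]
    exact (ih _ (Finset.erase_ssubset hx) M a b N).add_pos P
  · obtain ⟨x, hxh, rfl, rfl⟩ := G.exists_eq_of_not_nontrivial hW
    have hs := P.s_pos
    rw [signedFlow_cubic_vertex (Finset.mem_singleton_self x) hxh hxh hxh (by simp)]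
    simp only [signedFlow, flow_loop_cons, flow_zero, Finset.erase_singleton, Finset.card_empty,
      Multiset.card_cons, Multiset.card_zero]
    have hflow : (-1) ^ (0 + 1 + 1 + 0) * ((s + 2 - 1) * ((s + 2 - 1) * 1)) +
      (-1) ^ (0 + 1 + 0) * ((s + 2 - 1) * 1) = (1 + s) * s := by ring
    rw [hflow]
    positivity

namespace IsNet

theorem signedFlow_join_eq_zero (N : IsNet h W M a b) (hcut : cut W M = 1) :
    signedFlow s W (s(a, b) ::ₘ M) = 0 := by
  obtain ⟨p, hp, r, hr, M', rfl⟩ := exists_cons_of_cut_pos (X := W) (M := M) (by omega)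
  have hM := N.supportedOn
  obtain rfl : r = h := by grind [supportedOn_cons]
  have hM' : ∀ e ∈ M', r ∉ e := by
    rintro _ he ⟨v, rfl⟩
    obtain ⟨M'', rfl⟩ := Multiset.exists_cons_of_mem he
    have := N.loop_notMem
    simp only [cut_cons, supportedOn_cons] at hcut hM
    grind
  have hrp : r ≠ p := ne_of_mem_of_not_mem hp N.hub_notMem |>.symm
  rw [Multiset.cons_swap, Sym2.eq_swap (a := p), signedFlow,
    flow_cons_eq_zero_of_pendant _ hrp, mul_zero]
  have := ne_of_mem_of_not_mem N.left_mem N.hub_notMem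
  have := ne_of_mem_of_not_mem N.right_mem N.hub_notMem
  simpa [this.symm] using ⟨by tauto, hM'⟩

theorem netBound_of_innerCut_lt_two (P : FlowParams s t ρ) (N : IsNet h W M a b)
    (ih : ∀ W' ⊂ W, NetsBounded s t h W') (hX : X ⊂ W) (hX' : X.Nonempty)
    (hcut : innerCut h X M < 2) :
    NetBound s t (cut W M) (signedFlow s W (s(h, a) ::ₘ s(h, b) ::ₘ M))
      (signedFlow s W (s(a, b) ::ₘ M)) := by
  obtain ⟨X, Y, hXY, rfl, ha, hb, p, hp, r, hr, M₁, M₂, rfl, h₁, h₂⟩ :=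
    N.exists_split_of_innerCut_lt_two hX hX' hcut
  have N₁ : IsNet h X M₁ a p := N.left_of_inner_edge hXY ha hb hp hr h₁ h₂
  have N₂ : IsNet h Y M₂ b r := by
    rw [Finset.union_comm, Sym2.eq_swap, add_comm] at N
    exact N.symm.left_of_inner_edge hXY.symm hb ha hr hp h₂ h₁
  have hXW : X ⊂ X ∪ Y := left_lt_sup.2 fun hYX => Finset.disjoint_right.1 hXY hb (hYX hb)
  have hYW : Y ⊂ X ∪ Y := right_lt_sup.2 fun hXY' => Finset.disjoint_left.1 hXY ha (hXY' ha)
  have hk : cut (X ∪ Y) (s(p, r) ::ₘ (M₁ + M₂)) = cut X M₁ + cut Y M₂ := by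
    rw [cut_cons, cut_add, if_pos (by simp [hp, hr]), zero_add]
    have := N.hub_notMem
    have := Finset.disjoint_left.1 hXY
    congr 1
    · exact cut_congr h₁ (by grind)
    · exact cut_congr h₂ (by grind)
  rw [hk]
  exact (ih X hXW _ _ _ N₁).mul P (ih Y hYW _ _ _ N₂) N₁.cut_pos.ne' N₂.cut_pos.ne'
    (signedFlow_attach_inner_edge hXY h₁ h₂ ha hb hp hr)
    (signedFlow_join_inner_edge hXY h₁ h₂ ha hb hp hr)

theorem netBound_of_cut_lt_three (P : FlowParams s t ρ) (N : IsNet h W M a b)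
    (ih : ∀ W' ⊂ W, NetsBounded s t h W')
    (hN : ∀ Z ⊂ W, Z.Nonempty → 2 ≤ innerCut h Z M) (hk : cut W M ≠ 1) (hX : X ⊂ W)
    (hX' : X.Nonempty) (hcut : cut X (s(a, b) ::ₘ M) < 3) :
    NetBound s t (cut W M) (signedFlow s W (s(h, a) ::ₘ s(h, b) ::ₘ M))
      (signedFlow s W (s(a, b) ::ₘ M)) := by
  have hc := (N.isReduced_attach hN).signedFlow_pos_of_netsBounded P ih
  obtain ⟨ha, hb, Y, hXY, rfl, p₁, hp₁, p₂, hp₂, r₁, hr₁, r₂, hr₂, M₁, M₂, rfl, h₁, h₂⟩ :=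
    N.exists_split_of_cut_lt_three hX hX' hcut
  have hXY' := Finset.disjoint_left.1 hXY
  have hYW : Y ⊂ X ∪ Y := right_lt_sup.2 fun hXY => hXY' ha (hXY ha)
  have hhX : h ∉ X := fun hh => N.hub_notMem (hX.subset hh)
  have hY : ∀ v ∈ insert h Y, (v ∈ X ∪ Y ↔ v ∈ Y) := fun v hv => by
    have := N.hub_notMem
    grind
  have hY' : ∀ v ∈ insert h Y, ∀ w ∈ insert h Y,
      (v ∈ X ∪ Y ↔ w ∈ X ∪ Y) ↔ (v ∈ Y ↔ w ∈ Y) := fun v hv w hw => by rw [hY v hv, hY w hw]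
  have hk₁ : cut X (s(h, p₁) ::ₘ s(h, r₁) ::ₘ M₁) = 2 := by
    simp [cut_cons, cut_eq_zero (X := X) h₁ (by grind), hhX, hp₁, hr₁]
  have hk₂ : cut Y M₂ = cut (X ∪ Y) (s(p₁, p₂) ::ₘ s(r₁, r₂) ::ₘ (M₁ + M₂)) := by
    simp only [cut_cons, cut_add, cut_eq_zero (X := X ∪ Y) h₁ (by grind),
      cut_congr (Y := Y) h₂ hY', Finset.mem_union, hp₁, hp₂, hr₁, hr₂]
    simp
  have B₁ := ih X hX _ _ _ (N.inside_of_two_edge_cut hXY hN ha hb hp₁ hp₂ hr₁ hr₂ h₁ h₂)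
  have B₂ := ih Y hYW _ _ _ (N.outside_of_two_edge_cut hXY hN ha hb hp₁ hp₂ hr₁ hr₂ h₁ h₂)
  rw [hk₁] at B₁
  rw [hk₂] at B₂
  exact .of_two_edge_cut P hk hc (B₁.add_pos P) (B₂.add_pos P)
    (signedFlow_attach_two_edge_cut hhX hXY h₁ h₂ ha hb hp₁ hp₂ hr₁ hr₂)
    (signedFlow_join_two_edge_cut hhX hXY h₁ h₂ ha hb hp₁ hp₂ hr₁ hr₂)
    B₁.abs_mul_le (B₂.abs_le P) fun hk' => (hk' ▸ B₂).abs_mul_le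

end IsNet

theorem netsBounded (P : FlowParams s t ρ) (h : V) (W : Finset V) : NetsBounded s t h W := by
  induction W using Finset.strongInduction with
  | H W ih =>
  intro M a b N
  by_cases hinner : ∃ X ⊂ W, X.Nonempty ∧ innerCut h X M < 2
  · obtain ⟨X, hX, hX', hcut⟩ := hinner
    exact N.netBound_of_innerCut_lt_two P ih hX hX' hcut
  push Not at hinner
  have hc := (N.isReduced_attach hinner).signedFlow_pos_of_netsBounded P ih
  by_cases hk : cut W M = 1
  · rw [N.signedFlow_join_eq_zero hk, hk]
    exact .of_eq_zero P hc
  by_cases hsmall : ∃ X ⊂ W, X.Nonempty ∧ cut X (s(a, b) ::ₘ M) < 3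
  · obtain ⟨X, hX, hX', hcut⟩ := hsmall
    exact N.netBound_of_cut_lt_three P ih hinner hk hX hX' hcut
  push Not at hsmall
  have hjoin := N.isReduced_join hsmall (by have := N.cut_pos; omega)
  exact .of_nonneg P hk hc (hjoin.signedFlow_pos_of_netsBounded P ih).le

theorem IsReduced.flow_ne_zero (P : FlowParams s t ρ) (G : IsReduced h W M) :
    flow (s + 2) M ≠ 0 :=
  signedFlow_ne_zero.1
    (G.signedFlow_pos_of_netsBounded P fun W' _ => netsBounded P h W').ne'

end MainInduction

section Bridgeless

theorem exists_forall_mem_iff_and {V : Type*} {X Y Z : Finset V} {c : Prop}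
    (hXY : ∀ v ∈ X, v ∈ Y → (v ∈ Z ↔ c)) :
    ∃ Z' : Finset V, (∀ v ∈ X, (v ∈ Z' ↔ v ∈ Z)) ∧ ∀ v ∈ Y, (v ∈ Z' ↔ c) := by
  classical
  by_cases hc : c
  · exact ⟨Z ∩ X ∪ Y, by grind, by grind⟩
  · exact ⟨Z ∩ X, by grind, by grind⟩

variable {V : Type*} [DecidableEq V] {h a p r p₁ p₂ r₁ r₂ : V} {W X Y : Finset V}
  {M M₁ M₂ : EdgeMultiset V}

/-- The bridgeless multigraphs all of whose vertices, except possibly `h`, have degree at most 3.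
Since the edge of a one-edge cut is a bridge, and every bridge arises in this way, bridgelessness is
expressed by the cuts. -/
structure IsBridgelessNearCubic (h : V) (M : EdgeMultiset V) : Prop where
  degree_le : ∀ v ≠ h, degree v M ≤ 3
  cut_ne_one : ∀ X, cut X M ≠ 1

theorem exists_forall_mem_iff_and_hub (hXY : X ∩ Y = {h}) (Z : Finset V) :
    ∃ Z' : Finset V, (∀ v ∈ X, (v ∈ Z' ↔ v ∈ Z)) ∧ ∀ v ∈ Y, (v ∈ Z' ↔ h ∈ Z) := by
  refine exists_forall_mem_iff_and fun v hvX hvY => ?_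
  obtain rfl : v = h := Finset.mem_singleton.1 (hXY ▸ Finset.mem_inter.2 ⟨hvX, hvY⟩)
  rfl

theorem cut_singleton_eq_degree (hM : ∀ a, s(a, a) ∉ M) (v : V) : cut {v} M = degree v M := by
  induction M using Multiset.induction with
  | empty => simp
  | cons e M ih =>
    induction e with | _ a b =>
    have hab : a ≠ b := by rintro rfl; exact hM a (Multiset.mem_cons_self _ _)
    rw [cut_cons, degree_cons, ih fun a ha => hM a (Multiset.mem_cons_of_mem ha)]
    simp only [Finset.mem_singleton]
    grind

namespace IsBridgelessNearCubic

theorem of_loop_cons (G : IsBridgelessNearCubic h (s(a, a) ::ₘ M)) :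
    IsBridgelessNearCubic h M where
  degree_le v hv := by
    have := G.degree_le v hv
    rw [degree_cons] at this
    omega
  cut_ne_one X := by simpa [cut_cons] using G.cut_ne_one X

theorem left_of_add (G : IsBridgelessNearCubic h (M₁ + M₂)) (hXY : X ∩ Y = {h})
    (h₁ : SupportedOn X M₁) (h₂ : SupportedOn Y M₂) : IsBridgelessNearCubic h M₁ where
  degree_le v hv := by
    have := G.degree_le v hv
    rw [degree_add] at this
    omega
  cut_ne_one Z := by
    obtain ⟨Z', hX, hY⟩ := exists_forall_mem_iff_and_hub hXY Z
    have := G.cut_ne_one Z'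
    rwa [cut_add, cut_eq_zero h₂ (by grind), cut_congr (Y := Z) h₁ (by grind), add_zero] at this

theorem left_of_cons_add (G : IsBridgelessNearCubic h (s(p, r) ::ₘ (M₁ + M₂)))
    (hXY : X ∩ Y = {h}) (hp : p ∈ X) (hr : r ∈ Y) (h₁ : SupportedOn X M₁)
    (h₂ : SupportedOn Y M₂) : IsBridgelessNearCubic h (s(h, p) ::ₘ M₁) where
  degree_le v hv := by
    have := G.degree_le v hv
    rw [degree_cons, degree_add] at this
    rw [degree_cons, if_neg hv.symm]
    omega
  cut_ne_one Z := by
    obtain ⟨Z', hX, hY⟩ := exists_forall_mem_iff_and_hub hXY Z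
    have := G.cut_ne_one Z'
    rw [cut_cons, cut_add, cut_eq_zero h₂ (by grind), cut_congr (Y := Z) h₁ (by grind)] at this
    simp only [hX p hp, hY r hr, add_zero] at this
    simpa only [cut_cons, iff_comm (a := h ∈ Z)] using this

theorem left_of_two_edge_cut
    (G : IsBridgelessNearCubic h (s(p₁, p₂) ::ₘ s(r₁, r₂) ::ₘ (M₁ + M₂))) (hXY : Disjoint X Y)
    (hp₁ : p₁ ∈ X) (hp₂ : p₂ ∈ Y) (hr₁ : r₁ ∈ X) (hr₂ : r₂ ∈ Y) (h₁ : SupportedOn X M₁)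
    (h₂ : SupportedOn Y M₂) : IsBridgelessNearCubic h (s(p₁, r₁) ::ₘ M₁) where
  degree_le v hv := by
    have := G.degree_le v hv
    rw [degree_cons, degree_cons, degree_add] at this
    rw [degree_cons]
    omega
  cut_ne_one Z := by
    obtain ⟨Z', hX, hY⟩ := exists_forall_mem_iff_and (X := X) (Y := Y) (Z := Z)
      (c := p₁ ∈ Z ∧ r₁ ∈ Z) fun v hvX hvY => (Finset.disjoint_left.1 hXY hvX hvY).elim
    have := G.cut_ne_one Z'
    rw [cut_cons, cut_cons, cut_add, cut_eq_zero h₂ (by grind), cut_congr (Y := Z) h₁ (by grind)]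
      at this
    simp only [hX p₁ hp₁, hX r₁ hr₁, hY p₂ hp₂, hY r₂ hr₂] at this
    rw [cut_cons]
    by_cases p₁ ∈ Z <;> by_cases r₁ ∈ Z <;> simp_all

theorem exists_end_mem (G : IsBridgelessNearCubic h (s(p, r) ::ₘ M)) (hpr : r ≠ p) :
    ∃ e ∈ M, r ∈ e := by
  by_contra! hM
  have hcut := cut_singleton_le_degree r M
  rw [degree_eq_zero.2 hM] at hcut
  have := G.cut_ne_one {r}
  rw [cut_cons, Nat.le_zero.1 hcut] at this
  simp [hpr.symm] at this

theorem exists_hub_degree_pos (G : IsBridgelessNearCubic h M) (hM : M ≠ 0) :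
    ∃ h', IsBridgelessNearCubic h' M ∧ 0 < degree h' M := by
  by_cases hh : 0 < degree h M
  · exact ⟨h, G, hh⟩
  · obtain ⟨e, he⟩ := Multiset.exists_mem_of_ne_zero hM
    induction e with | _ a b =>
    refine ⟨a, ⟨fun v _ => ?_, G.cut_ne_one⟩,
      Nat.pos_of_ne_zero fun ha => degree_eq_zero.1 ha _ he (Sym2.mem_mk_left a b)⟩
    rcases eq_or_ne v h with rfl | hvh
    · omega
    · exact G.degree_le v hvh

end IsBridgelessNearCubic

section SmallCuts

variable [Finite V] {R : Type*} [CommRing R] [NoZeroDivisors R] {q : R}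

theorem flow_ne_zero_of_innerCut_eq_zero (G : IsBridgelessNearCubic h M)
    (ih : ∀ N, N.card < M.card → IsBridgelessNearCubic h N → flow q N ≠ 0)
    (hM : SupportedOn (insert h W) M) (hdeg : ∀ w ∈ W, 0 < degree w M) (hW : h ∉ W) (hX : X ⊂ W)
    (hX' : X.Nonempty) (hcut : innerCut h X M = 0) : flow q M ≠ 0 := by
  have hXY : Disjoint X (W \ X) := Finset.disjoint_sdiff
  rw [← Finset.union_sdiff_of_subset hX.subset] at hM
  obtain ⟨M₁, M₂, rfl, h₁, h₂⟩ :=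
    exists_split_of_innerCut_eq_zero (fun hh => hW (hX.subset hh)) hXY hM hcut
  have hM₁ : M₁ ≠ 0 := by
    obtain ⟨x, hx⟩ := hX'
    have := hdeg x (hX.subset hx)
    rw [degree_add, degree_eq_zero_of_supportedOn h₂ (by grind)] at this
    rintro rfl
    simp at this
  have hM₂ : M₂ ≠ 0 := by
    obtain ⟨y, hy, hyX⟩ := Finset.exists_of_ssubset hX
    have := hdeg y hy
    rw [degree_add, degree_eq_zero_of_supportedOn h₁ (by grind)] at this
    rintro rfl
    simp at this
  rw [← Multiset.card_pos] at hM₁ hM₂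
  have hinter : insert h X ∩ insert h (W \ X) = {h} := insert_inter_insert_of_disjoint hXY
  rw [flow_add q hinter h₁ h₂]
  refine mul_ne_zero (ih M₁ (by simpa) (G.left_of_add hinter h₁ h₂))
    (ih M₂ (by simpa) ?_)
  rw [add_comm] at G
  exact G.left_of_add ((Finset.inter_comm _ _).trans hinter) h₂ h₁

theorem flow_ne_zero_of_innerCut_eq_one (G : IsBridgelessNearCubic h M)
    (ih : ∀ N, N.card < M.card → IsBridgelessNearCubic h N → flow q N ≠ 0)
    (hM : SupportedOn (insert h W) M) (hW : h ∉ W) (hX : X ⊆ W)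
    (hcut : innerCut h X M = 1) : flow q M ≠ 0 := by
  have hXY : Disjoint X (W \ X) := Finset.disjoint_sdiff
  rw [← Finset.union_sdiff_of_subset hX] at hM
  have hhX : h ∉ X := fun hh => hW (hX hh)
  obtain ⟨p, hp, r, hr, M₁, M₂, rfl, h₁, h₂⟩ := exists_split_of_innerCut_eq_one hhX hXY hM hcut
  have hpr : p ≠ r := Finset.disjoint_iff_ne.1 hXY p hp r hr
  have hinter : insert h X ∩ insert h (W \ X) = {h} := insert_inter_insert_of_disjoint hXY
  have G' := G
  rw [Sym2.eq_swap, add_comm] at G'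
  have hM₁ : 0 < M₁.card := by
    obtain ⟨e, he, hpe⟩ := G'.exists_end_mem hpr
    refine Multiset.card_pos_iff_exists_mem.2 ⟨e, ?_⟩
    exact (Multiset.mem_add.1 he).resolve_left fun he => h₂.notMem (by grind) e he hpe
  have hM₂ : 0 < M₂.card := by
    obtain ⟨e, he, hre⟩ := G.exists_end_mem hpr.symm
    refine Multiset.card_pos_iff_exists_mem.2 ⟨e, ?_⟩
    exact (Multiset.mem_add.1 he).resolve_left fun he => h₁.notMem (by grind) e he hre
  have hp' := Finset.mem_insert_of_mem (b := h) hp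
  have hr' := Finset.mem_insert_of_mem (b := h) hr
  refine right_ne_zero_of_mul (a := q - 1) ?_
  rw [flow_cut_vertex_of_one_edge q hinter h₁ h₂ hp' hr']
  exact mul_ne_zero (ih _ (by simpa) (G.left_of_cons_add hinter hp' hr' h₁ h₂))
    (ih _ (by simpa) (G'.left_of_cons_add ((Finset.inter_comm _ _).trans hinter) hr' hp' h₂ h₁))

theorem flow_ne_zero_of_cut_eq_two (G : IsBridgelessNearCubic h M)
    (ih : ∀ N, N.card < M.card → IsBridgelessNearCubic h N → flow q N ≠ 0)
    (hM : SupportedOn W M) (hX : X ⊆ W) (hcut : cut X M = 2) : flow q M ≠ 0 := by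
  obtain ⟨p₁, hp₁, p₂, hp₂, r₁, hr₁, r₂, hr₂, M₁, M₂, rfl, h₁, h₂⟩ :=
    exists_split_of_cut_eq_two hX hM hcut
  have hXY : Disjoint X (W \ X) := Finset.disjoint_sdiff
  have G' := G
  rw [Sym2.eq_swap, Sym2.eq_swap (a := r₁), add_comm] at G'
  refine right_ne_zero_of_mul (a := q - 1) ?_
  rw [flow_two_edge_cut q hXY h₁ h₂ hp₁ hr₁ hp₂ hr₂]
  simp only [Multiset.card_cons, Multiset.card_add] at ih
  exact mul_ne_zero
    (ih _ (by rw [Multiset.card_cons]; omega) (G.left_of_two_edge_cut hXY hp₁ hp₂ hr₁ hr₂ h₁ h₂))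
    (ih _ (by rw [Multiset.card_cons]; omega)
      (G'.left_of_two_edge_cut hXY.symm hp₂ hp₁ hr₂ hr₁ h₂ h₁))

end SmallCuts

theorem IsBridgelessNearCubic.isReduced (G : IsBridgelessNearCubic h M) (hh : 0 < degree h M)
    (hloop : ∀ a, s(a, a) ∉ M) (hW : ∀ v, v ∈ W ↔ v ≠ h ∧ 0 < degree v M)
    (hM : SupportedOn (insert h W) M) (hinner : ∀ X ⊂ W, X.Nonempty → 2 ≤ innerCut h X M)
    (hcut : ∀ X ⊆ W, X.Nonempty → cut X M ≠ 2) : IsReduced h W M := by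
  have hW_cut : 0 < cut W M := by
    rwa [cut_congr (Y := {h}) hM (by grind), cut_singleton_eq_degree hloop]
  have hW_nonempty : W.Nonempty := by
    obtain ⟨w, hw, -⟩ := exists_cons_of_cut_pos hW_cut
    exact ⟨w, hw⟩
  have three_le_cut : ∀ X ⊆ W, X.Nonempty → 3 ≤ cut X M := by
    intro X hX hX'
    have := hcut X hX hX'
    have := G.cut_ne_one X
    rcases hX.eq_or_ssubset with rfl | hX
    · omega
    · have := (hinner X hX hX').trans (innerCut_le_cut h X M)
      omega
  exact {
    hub_notMem := by simp [hW]
    supportedOn := hM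
    loop_notMem := hloop h
    nonempty := hW_nonempty
    degree_eq := fun w hw => (G.degree_le w ((hW w).1 hw).1).antisymm <| by
      rw [← cut_singleton_eq_degree hloop]
      exact three_le_cut {w} (by simpa) (Finset.singleton_nonempty w)
    three_le_cut := fun X hX => three_le_cut X hX.subset
    two_le_innerCut := hinner
    two_le_cut := (three_le_cut W subset_rfl hW_nonempty).trans' (by omega) }

theorem exists_mem_iff_degree_pos [Finite V] (h : V) (M : EdgeMultiset V) :
    ∃ W : Finset V, (∀ v, v ∈ W ↔ v ≠ h ∧ 0 < degree v M) ∧ SupportedOn (insert h W) M := by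
  have hfin := Set.toFinite {v | v ≠ h ∧ 0 < degree v M}
  refine ⟨hfin.toFinset, by simp, fun e he v hv => ?_⟩
  have : degree v M ≠ 0 := fun h₀ => degree_eq_zero.1 h₀ e he hv
  simp only [Finset.mem_insert, Set.Finite.mem_toFinset, Set.mem_ofPred_eq]
  grind

theorem IsBridgelessNearCubic.flow_ne_zero [Finite V] {s t ρ : ℝ} (P : FlowParams s t ρ)
    (G : IsBridgelessNearCubic h M) : flow (s + 2) M ≠ 0 := by
  induction hn : M.card using Nat.strong_induction_on generalizing h M with
  | h n ih =>
  subst hn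
  by_cases hM₀ : M = 0
  · rw [hM₀, flow_zero]
    exact one_ne_zero
  by_cases hloop : ∃ a, s(a, a) ∈ M
  · obtain ⟨a, ha⟩ := hloop
    obtain ⟨M, rfl⟩ := Multiset.exists_cons_of_mem ha
    rw [flow_loop_cons]
    have := P.s_pos
    exact mul_ne_zero (by linarith) (ih _ (by simp) G.of_loop_cons rfl)
  push Not at hloop
  obtain ⟨h, G, hh⟩ := G.exists_hub_degree_pos hM₀
  obtain ⟨W, hW, hM⟩ := exists_mem_iff_degree_pos h M
  replace ih : ∀ N, N.card < M.card → IsBridgelessNearCubic h N → flow (s + 2) N ≠ 0 :=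
    fun N hN G => ih _ hN G rfl
  by_cases hcut : ∃ X ⊆ W, X.Nonempty ∧ cut X M = 2
  · obtain ⟨X, hX, -, hcut⟩ := hcut
    exact flow_ne_zero_of_cut_eq_two G ih hM (hX.trans (Finset.subset_insert h W)) hcut
  push Not at hcut
  have hhW : h ∉ W := by simp [hW]
  by_cases hinner : ∃ X ⊂ W, X.Nonempty ∧ innerCut h X M < 2
  · obtain ⟨X, hX, hX', hinner⟩ := hinner
    obtain hinner | hinner : innerCut h X M = 0 ∨ innerCut h X M = 1 := by omega
    · exact flow_ne_zero_of_innerCut_eq_zero G ih hM (fun w hw => ((hW w).1 hw).2) hhW hX hX'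
        hinner
    · exact flow_ne_zero_of_innerCut_eq_one G ih hM hhW hX.subset hinner
  push Not at hinner
  exact (G.isReduced hh hloop hW hM hinner hcut).flow_ne_zero P

end Bridgeless

end EdgeMultiset

namespace Multigraph

variable {V E : Type}

/-- The unordered pair of ends of the edge `e`. -/
def ends (G : Multigraph V E) (e : E) : Sym2 V := s(G.fst e, G.snd e)

theorem reachSetoid_coe (G : Multigraph V E) (F : Finset E) :
    G.reachSetoid F = EdgeMultiset.componentSetoid (F.val.map G.ends) := by
  rw [reachSetoid, EdgeMultiset.componentSetoid]
  congr 1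
  funext a b
  simp only [edgeRelOn, ends, Multiset.mem_map, Sym2.eq_iff, Finset.mem_coe, Finset.mem_val]

theorem ncomp_coe (G : Multigraph V E) (F : Finset E) :
    G.ncomp F = EdgeMultiset.numComponents (F.val.map G.ends) := by
  rw [ncomp, reachSetoid_coe, EdgeMultiset.numComponents]

variable [Fintype E]

/-- The multigraph `G` with the names of its edges forgotten. -/
def edgeMultiset (G : Multigraph V E) : EdgeMultiset V := Finset.univ.val.map G.ends

theorem eval_flowPoly [Finite V] (G : Multigraph V E) (q : ℝ) :
    G.flowPoly.eval q = EdgeMultiset.flow q G.edgeMultiset := by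
  have heval (F : Finset E) : Polynomial.eval q ((-1) ^ (Nat.card E - F.card) *
      Polynomial.X ^ (F.card + G.ncomp F - Nat.card V)) =
      (-1) ^ (Nat.card E - (F.val.map G.ends).card) * q ^ ((F.val.map G.ends).card +
        EdgeMultiset.numComponents (F.val.map G.ends) - Nat.card V) := by
    simp [ncomp_coe]
  rw [flowPoly, Subsingleton.elim (Fintype.ofFinite E) ‹Fintype E›, Polynomial.eval_finsetSum]
  simp only [heval]
  rw [EdgeMultiset.flow, edgeMultiset, multiset_powerset_map, Multiset.map_map,
    ← Finset.powerset_univ, Finset.sum, Finset.powerset, Multiset.map_pmap]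
  dsimp only
  rw [Multiset.pmap_eq_map]
  simp

theorem degree_edgeMultiset [DecidableEq V] (G : Multigraph V E) (v : V) :
    EdgeMultiset.degree v G.edgeMultiset = G.degree v := by
  have hcard (f : E → V) : Nat.card {e | f e = v} = ∑ e, if f e = v then 1 else 0 := by
    rw [Finset.sum_boole, Nat.card_eq_fintype_card, Fintype.card_subtype]
    rfl
  rw [EdgeMultiset.degree, edgeMultiset, Multiset.bind_map, Multiset.count_bind, degree, hcard,
    hcard, ← Finset.sum_add_distrib]
  refine Finset.sum_congr rfl fun e _ => ?_
  simp [ends, Sym2.toMultiset, List.count_cons, add_comm]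

theorem cut_edgeMultiset_ne_one [Finite V] (G : Multigraph V E) (hG : G.Bridgeless)
    (X : Finset V) : EdgeMultiset.cut X G.edgeMultiset ≠ 1 := by
  classical
  intro hcut
  rw [EdgeMultiset.cut, edgeMultiset, Multiset.countP_map] at hcut
  have hcard : (Finset.univ.filter fun e => EdgeMultiset.Crosses X (G.ends e)).card = 1 := hcut
  obtain ⟨e, he⟩ := Finset.card_eq_one.1 hcard
  have crosses_iff (e' : E) : EdgeMultiset.Crosses X (G.ends e') ↔ e' = e := by
    simpa using Finset.ext_iff.1 he e'
  simp only [ends, EdgeMultiset.crosses_mk] at crosses_iff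
  have hle : G.reachSetoid {e' | e' ≠ e} ≤ Setoid.ker (· ∈ X) := by
    refine Setoid.eqvGen_le ?_
    rintro a b ⟨e', he', hab⟩
    have := not_not.1 (mt (crosses_iff e').1 he')
    rw [Setoid.ker_def]
    rcases hab with ⟨rfl, rfl⟩ | ⟨rfl, rfl⟩
    exacts [propext this, propext this.symm]
  refine hG e (card_quotient_lt_of_lt (lt_of_le_not_ge ?_ fun hge => ?_))
  · exact Setoid.eqvGen_mono fun a b ⟨e', _, hab⟩ => ⟨e', Set.mem_univ e', hab⟩
  · have := hle (hge (Relation.EqvGen.rel (G.fst e) (G.snd e) ⟨e, Set.mem_univ e, .inl ⟨rfl, rfl⟩⟩))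
    exact (crosses_iff e).2 rfl (iff_of_eq this)

theorem exists_isBridgelessNearCubic [DecidableEq V] [Finite V] [Nonempty V] (G : Multigraph V E)
    (hG : G.Bridgeless) (hcubic : {v | 3 < G.degree v}.ncard ≤ 1) :
    ∃ h, EdgeMultiset.IsBridgelessNearCubic h G.edgeMultiset := by
  obtain ⟨h, hh⟩ := (Set.ncard_le_one_iff_subset_singleton (Set.toFinite _)).1 hcubic
  exact ⟨h, fun v hv => by simpa [degree_edgeMultiset] using mt (@hh v) hv,
    G.cut_edgeMultiset_ne_one hG⟩

end Multigraph

theorem EdgeMultiset.exists_flowParams {α q : ℝ}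
    (hα : α ^ 4 - 8 * α ^ 3 + 22 * α ^ 2 - 28 * α + 17 = 0) (hα₃ : α < 3) (hq : 2 < q)
    (hqα : q ≤ α) : ∃ t ρ, FlowParams (q - 2) t ρ := by
  obtain ⟨s, rfl⟩ : ∃ s, q = s + 2 := ⟨q - 2, by ring⟩
  obtain ⟨a, rfl⟩ : ∃ a, α = a + 2 := ⟨α - 2, by ring⟩
  rw [add_sub_cancel_right]
  obtain ⟨t, ht⟩ : ∃ t, 2 * t = 1 - s ^ 2 := ⟨(1 - s ^ 2) / 2, by ring⟩
  have ha : (1 - a ^ 2) ^ 2 = 4 * a := by linear_combination hα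
  have hs : 0 < s := by linarith
  have ht₀ : 0 < t := by nlinarith
  have ht₁ : 0 < 1 - t ^ 2 := by nlinarith
  have hst : s ≤ t ^ 2 := by
    have hat : 1 - a ^ 2 ≤ 2 * t := by nlinarith
    have ha₁ : 0 ≤ 1 - a ^ 2 := by nlinarith
    linarith [ha, pow_le_pow_left₀ ha₁ hat 2]
  exact ⟨t, (s + t ^ 2) / (s * (1 - t ^ 2)), hs, ht₀, ht, hst,
    div_mul_cancel₀ _ (mul_pos hs ht₁).ne'⟩

open Multigraph in
/-- Jackson. Let `α₂ ≈ 2.225` be the unique real root in `(2,3)` of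
`q⁴ − 8q³ + 22q² − 28q + 17`. Then every bridgeless near-cubic finite multigraph `G`
(at most one vertex of degree larger than `3`) has no flow root in `(2, α₂]`. -/
theorem flowPoly_ne_zero_near_cubic {V E : Type} [Fintype V] [Fintype E]
    (G : Multigraph V E) (hbl : G.Bridgeless)
    (hnc : {v | 3 < G.degree v}.ncard ≤ 1)
    (α : ℝ) (hα : α ^ 4 - 8 * α ^ 3 + 22 * α ^ 2 - 28 * α + 17 = 0)
    (hα2 : 2 < α) (hα3 : α < 3) :
    ∀ q : ℝ, 2 < q → q ≤ α → G.flowPoly.eval q ≠ 0 := by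
  classical
  intro q hq hqα
  obtain ⟨t, ρ, P⟩ := EdgeMultiset.exists_flowParams hα hα3 hq hqα
  rw [G.eval_flowPoly]
  cases isEmpty_or_nonempty V
  · have : IsEmpty E := ⟨fun e => isEmptyElim (G.fst e)⟩
    simp [edgeMultiset, EdgeMultiset.flow_zero]
  · obtain ⟨h, hG⟩ := G.exists_isBridgelessNearCubic hbl hnc
    simpa only [sub_add_cancel] using hG.flow_ne_zero P
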